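/- arXiv:1009.2688 — 4 statements merged into one kernel-verified Lean document; each statement's English description precedes it below -/
import Mathlib

section
/- Let Ω ⊂ ℝ² be a bounded open connected set whose topological boundary ∂Ω is a Jordan curve, i.e. the image of an injective continuous map from the unit circle 𝕊¹ (equivalently, a homeomorphic image of 𝕊¹). Then the closure cl(Ω) is path-connected and simply connected. -/
/-- A Jordan curve in the plane: the image of an injective continuous map from the
unit circle `𝕊¹`. -/
def IsJordanCurve (C : Set (EuclideanSpace ℝ (Fin 2))) : Prop :=
  ∃ f : Metric.sphere (0 : EuclideanSpace ℝ (Fin 2)) 1 → EuclideanSpace ℝ (Fin 2),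
    Continuous f ∧ Function.Injective f ∧ Set.range f = C

open Set Topology

lemma jc_exists_log {A : Type*} [TopologicalSpace A] [SimplyConnectedSpace A]
    [LocallyPathConnectedSpace A] (g : A → ℂ) (hg : Continuous g) (h0 : ∀ a, g a ≠ 0) :
    ∃ L : A → ℂ, Continuous L ∧ ∀ a, Complex.exp (L a) = g a := by
  obtain ⟨a₀⟩ : Nonempty A := inferInstance
  obtain ⟨F, ⟨-, hF⟩, -⟩ := Complex.isCoveringMapOn_exp.existsUnique_continuousMap_lifts
    (⟨g, hg⟩ : C(A, ℂ)) (a₀ := a₀) (e₀ := Complex.log (g a₀)) (Complex.exp_log (h0 a₀))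
    (fun a => h0 a)
  exact ⟨F, F.continuous, fun a => congrFun hF a⟩

lemma jc_const {A : Type*} [TopologicalSpace A] [PreconnectedSpace A] (L : A → ℂ)
    (hL : Continuous L) (h : ∀ a, Complex.exp (L a) = 1) (a b : A) : L a = L b :=
  Complex.isCoveringMap_exp.const_of_comp hL (fun a a' => Subtype.ext (by simp [h])) a b

lemma jc_no_log : ¬ ∃ L : Circle → ℂ, Continuous L ∧ ∀ z, Complex.exp (L z) = z := by
  rintro ⟨L, hL, h⟩
  have key := jc_const (fun t : ℝ => L (Circle.exp t) - t * Complex.I) (by fun_prop)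
    (fun t => by rw [Complex.exp_sub, h, Circle.coe_exp, div_self (Complex.exp_ne_zero _)])
    (2 * Real.pi) 0
  simp [Real.pi_ne_zero] at key

lemma jc_form (u : Circle → ℂ) (hu : Continuous u) (h0 : ∀ z, u z ≠ 0) :
    ∃ n : ℤ, ∃ φ : Circle → ℂ, Continuous φ ∧ ∀ z : Circle, u z = (z : ℂ) ^ n * Complex.exp (φ z) := by
  obtain ⟨L, hL, h⟩ := jc_exists_log (fun t : ℝ => u (Circle.exp t)) (by fun_prop) (fun _ => h0 _)
  have hc : ∀ t, L (t + 2 * Real.pi) - L t = L (0 + 2 * Real.pi) - L 0 := fun t =>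
    jc_const (fun t => L (t + 2 * Real.pi) - L t) (by fun_prop)
      (fun t => by
        rw [Complex.exp_sub, h, h, Circle.periodic_exp t, div_self (h0 _)]) t 0
  have h1 : Complex.exp (L (0 + 2 * Real.pi) - L 0) = 1 := by
    rw [Complex.exp_sub, h, h, Circle.periodic_exp 0, div_self (h0 _)]
  obtain ⟨n, hn⟩ := Complex.exp_eq_one_iff.1 h1
  let ψ : C(ℝ, ℂ) := ⟨fun t => L t - n * (t * Complex.I), by fun_prop⟩
  have hper : Function.Periodic ψ (2 * Real.pi) := fun t => by
    have := hc t
    rw [hn] at this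
    simp only [ψ, ContinuousMap.coe_mk]
    push_cast
    linear_combination this
  have hq : IsQuotientMap Circle.exp :=
    isLocalHomeomorph_circleExp.isOpenMap.isQuotientMap Circle.exp.continuous
      (fun z => ⟨Complex.arg z, Circle.exp_arg z⟩)
  have hfac : Function.FactorsThrough ψ Circle.exp := by
    intro a b hab
    obtain ⟨m, hm⟩ := Circle.exp_eq_exp.1 hab
    rw [hm]
    exact hper.int_mul m b
  refine ⟨n, hq.lift ψ hfac, (hq.lift ψ hfac).continuous, fun z => ?_⟩
  obtain ⟨t, rfl⟩ := hq.surjective z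
  have : hq.lift ψ hfac (Circle.exp t) = ψ t := congrArg (fun g : C(ℝ, ℂ) => g t) (hq.lift_comp ψ hfac)
  rw [this, ← h, Circle.coe_exp, ← Complex.exp_int_mul, ← Complex.exp_add]
  congr 1
  simp [ψ]

lemma jc_bounded (s : Circle → ℂ) (hs : Continuous s)
    (hlog : ¬ ∃ L : Circle → ℂ, Continuous L ∧ ∀ z, Complex.exp (L z) = s z)
    (h0 : ∀ z, s z ≠ 0) :
    Bornology.IsBounded (connectedComponentIn (range s)ᶜ 0) := by
  by_contra hb
  apply hlog
  set U := connectedComponentIn (range s)ᶜ 0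
  have hC : IsCompact (range s) := isCompact_range hs
  have h0U : (0 : ℂ) ∈ (range s)ᶜ := by rintro ⟨z, hz⟩; exact h0 z hz
  have hUo : IsOpen U := hC.isClosed.isOpen_compl.connectedComponentIn
  have hUc : IsConnected U := isConnected_connectedComponentIn_iff.2 h0U
  obtain ⟨M, hM⟩ := hC.isBounded.exists_norm_le
  obtain ⟨b, hbU, hbM⟩ : ∃ b ∈ U, M < ‖b‖ := by
    by_contra! hcon
    exact hb (isBounded_iff_forall_norm_le.2 ⟨M, hcon⟩)
  have hM0 : 0 ≤ M := (norm_nonneg _).trans (hM (s 1) ⟨1, rfl⟩)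
  have hb0 : b ≠ 0 := by rintro rfl; simp at hbM; linarith
  obtain ⟨γ, hγ⟩ := (hUo.isConnected_iff_isPathConnected.1 hUc).joinedIn b hbU 0
    (mem_connectedComponentIn h0U)
  have hγ' : ∀ t z, s z - γ t ≠ 0 := fun t z hz => by
    have := connectedComponentIn_subset _ _ (hγ t)
    exact this ⟨z, sub_eq_zero.1 hz⟩
  have hslit : ∀ z, 1 - s z / b ∈ Complex.slitPlane := fun z => by
    rw [sub_eq_add_neg]
    apply Complex.mem_slitPlane_of_norm_lt_one
    rw [norm_neg, norm_div, div_lt_one (norm_pos_iff.2 hb0)]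
    exact (hM _ ⟨z, rfl⟩).trans_lt hbM
  let f : C(Circle, ℂ) := ⟨fun z => Complex.log (-b) + Complex.log (1 - s z / b),
    continuous_const.add (Continuous.clog (by fun_prop) hslit)⟩
  let H : C(unitInterval × Circle, {z : ℂ // z ≠ 0}) :=
    ⟨fun p => ⟨s p.2 - γ p.1, hγ' _ _⟩, by fun_prop⟩
  have hH0 : ∀ a, H (0, a) = ⟨Complex.exp (f a), Complex.exp_ne_zero _⟩ := fun a => by
    apply Subtype.ext
    simp only [H, f, ContinuousMap.coe_mk, γ.source]
    rw [Complex.exp_add, Complex.exp_log (neg_ne_zero.2 hb0),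
      Complex.exp_log (Complex.slitPlane_ne_zero (hslit a))]
    field_simp
    ring
  let G := Complex.isCoveringMap_exp.liftHomotopy H f hH0
  refine ⟨fun z => G (1, z), by fun_prop, fun z => ?_⟩
  have := congrArg Subtype.val (congrFun (Complex.isCoveringMap_exp.liftHomotopy_lifts H f hH0) (1, z))
  simpa [H, G] using this

lemma jc_subset_of_frontier {S V : Set ℂ} (hS : IsPreconnected S) (hV : IsOpen V)
    (hd : Disjoint S (frontier V)) (hne : (S ∩ V).Nonempty) : S ⊆ V := by
  refine hS.subset_left_of_subset_union hV isClosed_closure.isOpen_compl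
    (disjoint_compl_right.mono_right (compl_subset_compl.2 subset_closure)) ?_ hne
  intro x hx
  by_cases hxV : x ∈ V
  · exact Or.inl hxV
  · refine Or.inr fun hxc => ?_
    exact disjoint_left.1 hd hx ⟨hxc, fun h => hxV (interior_subset h)⟩

lemma jc_frontier_comp {W : Set ℂ} (hW : IsOpen W) (a : ℂ) :
    frontier (connectedComponentIn W a) ⊆ Wᶜ := by
  intro x hx hxW
  have ho : IsOpen (connectedComponentIn W x) := hW.connectedComponentIn
  obtain ⟨y, hy1, hy2⟩ := mem_closure_iff.1 hx.1 _ ho (mem_connectedComponentIn hxW)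
  have he : connectedComponentIn W x = connectedComponentIn W a :=
    (connectedComponentIn_eq hy1).trans (connectedComponentIn_eq hy2).symm
  apply hx.2
  rw [← he, ho.interior_eq]
  exact mem_connectedComponentIn hxW

lemma jc_no_frontier {V : Set ℂ} (hb : Bornology.IsBounded V) (hne : V.Nonempty)
    (hf : frontier V = ∅) : False := by
  have := (isClopen_iff_frontier_eq_empty.2 hf).eq_univ hne
  rw [this] at hb
  exact NormedSpace.unbounded_univ ℝ ℂ hb

lemma jc_iter (ζ : ℂ) (n : ℕ) (hn : n ≠ 0) (hζ : ζ ^ n = 1) (U : Set ℂ)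
    (h : ∀ x ∈ U, ζ * x ∈ U) : ∀ x, ζ * x ∈ U → x ∈ U := by
  have hk : ∀ k : ℕ, ∀ x ∈ U, ζ ^ k * x ∈ U := by
    intro k
    induction k with
    | zero => intro x hx; simpa using hx
    | succ k ih => intro x hx; rw [pow_succ', mul_assoc]; exact h _ (ih x hx)
  intro x hx
  have := hk (n - 1) _ hx
  rwa [← mul_assoc, ← pow_succ, Nat.sub_add_cancel (Nat.one_le_iff_ne_zero.2 hn), hζ, one_mul]
    at this

lemma jc_rot (C : Set ℂ) (hC : IsCompact C) (hCc : IsPreconnected C) (h0 : (0 : ℂ) ∉ C)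
    (hb : Bornology.IsBounded (connectedComponentIn Cᶜ 0))
    (ζ : ℂ) (n : ℕ) (hn : n ≠ 0) (hζ : ζ ^ n = 1) (hd : ∀ x ∈ C, ζ * x ∉ C) : False := by
  have hζ0 : ζ ≠ 0 := by rintro rfl; simp [hn] at hζ
  set U := connectedComponentIn Cᶜ 0 with hU
  have hUo : IsOpen U := hC.isClosed.isOpen_compl.connectedComponentIn
  have hUc : IsPreconnected U := isPreconnected_connectedComponentIn
  have h0U : (0 : ℂ) ∈ U := mem_connectedComponentIn h0
  have hUC : ∀ x ∈ U, x ∉ C := fun x hx => connectedComponentIn_subset _ _ hx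
  have hfU : frontier U ⊆ C := by simpa using jc_frontier_comp hC.isClosed.isOpen_compl 0
  let e : ℂ ≃ₜ ℂ := Homeomorph.mulLeft₀ ζ hζ0
  have hee : ∀ x, e x = ζ * x := fun x => rfl
  have hVo : IsOpen (e '' U) := e.isOpenMap _ hUo
  have h0V : (0 : ℂ) ∈ e '' U := ⟨0, h0U, by simp [hee]⟩
  have hVc : IsPreconnected (e '' U) := hUc.image _ e.continuous.continuousOn
  have hfV : frontier (e '' U) ⊆ e '' C := by
    rw [← e.image_frontier]; exact image_mono hfU
  have hdisj : Disjoint C (e '' C) := by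
    rw [disjoint_left]
    rintro _ hx ⟨y, hy, rfl⟩
    exact hd y hy hx
  have hVb : Bornology.IsBounded (e '' U) := by
    obtain ⟨M, hM⟩ := hb.exists_norm_le
    have : ‖ζ‖ = 1 := Complex.norm_eq_one_of_pow_eq_one hζ hn
    refine isBounded_iff_forall_norm_le.2 ⟨M, ?_⟩
    rintro _ ⟨x, hx, rfl⟩
    rw [hee, norm_mul, this, one_mul]; exact hM x hx
  have hend : U = e '' U → False := fun h => by
    refine jc_no_frontier hb ⟨0, h0U⟩ ?_
    rw [← subset_empty_iff]
    intro x hx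
    exact disjoint_left.1 hdisj (hfU hx) (hfV (h ▸ hx))
  by_cases h1 : (e '' C ∩ U).Nonempty
  · by_cases h2 : (C ∩ e '' U).Nonempty
    · have s1 : e '' C ⊆ U := jc_subset_of_frontier (hCc.image _ e.continuous.continuousOn) hUo
        (hdisj.symm.mono_right hfU) h1
      have s2 : C ⊆ e '' U := jc_subset_of_frontier hCc hVo (hdisj.mono_right hfV) h2
      refine jc_no_frontier (hb.union hVb) ⟨0, Or.inl h0U⟩ ?_
      rw [← subset_empty_iff]
      intro x hx
      have hx2 : x ∉ U ∪ e '' U := by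
        have := hx.2
        rwa [(hUo.union hVo).interior_eq] at this
      rcases frontier_union_subset U (e '' U) hx with h | h
      · exact hx2 (Or.inr (s2 (hfU h.1)))
      · exact hx2 (Or.inl (s1 (hfV h.2)))
    · have s : e '' U ⊆ U := by
        refine jc_subset_of_frontier hVc hUo (Disjoint.mono_right hfU ?_) ⟨0, h0V, h0U⟩
        rw [disjoint_left]
        intro x hx hxC
        exact h2 ⟨x, hxC, hx⟩
      refine hend (Subset.antisymm (fun x hx => ?_) s)
      have hit := jc_iter ζ n hn hζ U (fun x hx => s ⟨x, hx, rfl⟩)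
      refine ⟨ζ⁻¹ * x, hit _ ?_, ?_⟩
      · rwa [mul_inv_cancel_left₀ hζ0]
      · rw [hee, mul_inv_cancel_left₀ hζ0]
  · have s : U ⊆ e '' U := by
      refine jc_subset_of_frontier hUc hVo (Disjoint.mono_right hfV ?_) ⟨0, h0U, h0V⟩
      rw [disjoint_left]
      intro x hx hxC
      exact h1 ⟨x, hxC, hx⟩
    have hinv : ∀ x ∈ U, ζ⁻¹ * x ∈ U := fun x hx => by
      obtain ⟨y, hy, rfl⟩ := s hx
      rwa [hee, inv_mul_cancel_left₀ hζ0]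
    have hit := jc_iter ζ⁻¹ n hn (by rw [inv_pow, hζ, inv_one]) U hinv
    refine hend (Subset.antisymm s ?_)
    rintro _ ⟨x, hx, rfl⟩
    apply hit
    rwa [hee, inv_mul_cancel_left₀ hζ0]

/-- Winding number `n ≥ 1` of an injective curve must be one. -/
lemma jc_deg_one (f : Circle → ℂ) (hinj : Function.Injective f) (n : ℕ) (hn : n ≠ 0)
    (φ : Circle → ℂ) (hφ : Continuous φ) (h : ∀ z : Circle, f z = (z : ℂ) ^ n * Complex.exp (φ z)) :
    n = 1 := by
  by_contra hn1
  have hnC : (n : ℂ) ≠ 0 := Nat.cast_ne_zero.2 hn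
  let s : Circle → ℂ := fun z => z * Complex.exp (φ z / n)
  have hs : Continuous s := by fun_prop
  have hsf : ∀ z, s z ^ n = f z := fun z => by
    simp only [s]
    rw [mul_pow, ← Complex.exp_nat_mul, mul_div_cancel₀ _ hnC, h]
  have hs0 : ∀ z, s z ≠ 0 := fun z => mul_ne_zero (Circle.coe_ne_zero z) (Complex.exp_ne_zero _)
  have hlog : ¬ ∃ L : Circle → ℂ, Continuous L ∧ ∀ z, Complex.exp (L z) = s z := by
    rintro ⟨L, hL, hLs⟩
    refine jc_no_log ⟨fun z => L z - φ z / n, by fun_prop, fun z => ?_⟩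
    rw [Complex.exp_sub, hLs]
    exact mul_div_cancel_right₀ _ (Complex.exp_ne_zero _)
  have hprim := Complex.isPrimitiveRoot_exp n hn
  refine jc_rot (range s) (isCompact_range hs) (isPreconnected_range hs)
    (by rintro ⟨z, hz⟩; exact hs0 z hz) (jc_bounded s hs hlog hs0) _ n hn hprim.pow_eq_one ?_
  rintro _ ⟨x, rfl⟩ ⟨y, hy⟩
  have hxy : y = x := hinj (by rw [← hsf, ← hsf, hy, mul_pow, hprim.pow_eq_one, one_mul])
  rw [hxy] at hy
  have : Complex.exp (2 * Real.pi * Complex.I / n) = 1 :=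
    (mul_right_cancel₀ (hs0 x) (by rw [one_mul]; exact hy)).symm
  exact hprim.ne_one (by omega) this

/-- Gluing of two continuous functions along the frontier. -/
lemma jc_glue (Ω : Set ℂ) (hΩ : IsOpen Ω) (g k : ℂ → ℂ) (hg : ContinuousOn g (closure Ω))
    (hk : ContinuousOn k Ωᶜ) (h : ∀ x ∈ frontier Ω, g x = k x) :
    ∃ G : ℂ → ℂ, Continuous G ∧ (∀ x ∈ closure Ω, G x = g x) ∧ ∀ x ∈ Ωᶜ, G x = k x := by
  classical
  have h2 : ∀ x ∈ Ωᶜ, (if x ∈ closure Ω then g x else k x) = k x := fun x hx => by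
    split_ifs with hc
    · exact h x ⟨hc, by rwa [hΩ.interior_eq]⟩
    · rfl
  have h1 : ∀ x ∈ closure Ω, (if x ∈ closure Ω then g x else k x) = g x := fun x hx => if_pos hx
  refine ⟨fun x => if x ∈ closure Ω then g x else k x, ?_, h1, h2⟩
  rw [← continuousOn_univ]
  have : (univ : Set ℂ) = closure Ω ∪ Ωᶜ := by
    refine (eq_univ_of_forall fun x => ?_).symm
    by_cases hx : x ∈ Ω
    · exact Or.inl (subset_closure hx)
    · exact Or.inr hx
  rw [this]
  exact (hg.congr h1).union_of_isClosed (hk.congr h2) isClosed_closure hΩ.isClosed_compl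

lemma jc_deg_ne_zero (Ω : Set ℂ) (hΩ : IsOpen Ω) (hb : Bornology.IsBounded Ω) (h0 : (0 : ℂ) ∈ Ω)
    (f : Circle → ℂ) (hf : IsClosedEmbedding f) (hr : range f = frontier Ω)
    (φ : Circle → ℂ) (hφ : Continuous φ) (h : ∀ z, f z = Complex.exp (φ z)) : False := by
  obtain ⟨Φ, hΦ⟩ := ContinuousMap.exists_extension' hf (⟨φ, hφ⟩ : C(Circle, ℂ))
  obtain ⟨G, hG, hG1, hG2⟩ := jc_glue Ω hΩ (fun z => Complex.exp (Φ z)) id (by fun_prop)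
    continuousOn_id (by
      intro x hx
      rw [← hr] at hx
      obtain ⟨z, rfl⟩ := hx
      rw [id, show Φ (f z) = φ z from congrFun hΦ z, h])
  have hG0 : ∀ x, G x ≠ 0 := fun x => by
    by_cases hx : x ∈ Ω
    · rw [hG1 x (subset_closure hx)]; exact Complex.exp_ne_zero _
    · rw [hG2 x hx]; rintro rfl; exact hx h0
  obtain ⟨L, hL, hLG⟩ := jc_exists_log G hG hG0
  obtain ⟨M, hM⟩ := hb.exists_norm_le
  have hM0 : 0 ≤ M := (norm_nonneg _).trans (hM 0 h0)
  have hR : ((M + 1 : ℝ) : ℂ) ≠ 0 := by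
    rw [Complex.ofReal_ne_zero]; positivity
  refine jc_no_log ⟨fun z => L ((M + 1 : ℝ) * z) - Complex.log (M + 1 : ℝ), by fun_prop, fun z => ?_⟩
  rw [Complex.exp_sub, hLG, Complex.exp_log hR, hG2, id, mul_div_cancel_left₀ _ hR]
  intro hin
  have := hM _ hin
  rw [norm_mul, Circle.norm_coe, Complex.norm_real, Real.norm_of_nonneg (by positivity)] at this
  linarith

lemma jc_retract (Ω : Set ℂ) (hΩ : IsOpen Ω) (hb : Bornology.IsBounded Ω) (h0 : (0 : ℂ) ∈ Ω)
    (f : Circle → ℂ) (hf : Continuous f) (hinj : Function.Injective f)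
    (hr : range f = frontier Ω) :
    ∃ r : ℂ → ℂ, Continuous r ∧ (∀ x, r x ∈ closure Ω) ∧ ∀ x ∈ closure Ω, r x = x := by
  have hΩf : ∀ x ∈ frontier Ω, x ∉ Ω := fun x hx hxΩ => hx.2 (by rwa [hΩ.interior_eq])
  have hf0 : ∀ z, f z ≠ 0 := fun z hz => hΩf (f z) (hr ▸ ⟨z, rfl⟩) (hz ▸ h0)
  obtain ⟨n, φ, hφ, hn⟩ := jc_form f hf hf0
  wlog hpos : 0 ≤ n generalizing f n φ
  · refine this (fun z => f z⁻¹) (by fun_prop) (fun a b hab => inv_injective (hinj hab)) ?_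
      (fun z => hf0 _) (-n) (fun z => φ z⁻¹) (by fun_prop) (fun z => ?_) (by omega)
    · rw [← hr]; exact (inv_surjective (G := Circle)).range_comp f
    · rw [hn, Circle.coe_inv, inv_zpow']
  lift n to ℕ using hpos
  simp only [zpow_natCast] at hn
  have hce : IsClosedEmbedding f := hf.isClosedEmbedding hinj
  have hn0 : n ≠ 0 := by
    rintro rfl
    exact jc_deg_ne_zero Ω hΩ hb h0 f hce hr φ hφ (by simpa using hn)
  obtain rfl := jc_deg_one f hinj n hn0 φ hφ hn
  simp only [pow_one] at hn
  obtain ⟨Φ, hΦ⟩ := ContinuousMap.exists_extension' hce (⟨φ, hφ⟩ : C(Circle, ℂ))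
  have hΦ' : ∀ z, Φ (f z) = φ z := fun z => congrFun hΦ z
  let q : ℂ → ℂ := fun x => x * Complex.exp (-Φ x)
  have hq : Continuous q := by fun_prop
  have hq0 : ∀ x ∈ Ωᶜ, q x ≠ 0 := fun x hx => mul_ne_zero (by rintro rfl; exact hx h0)
    (Complex.exp_ne_zero _)
  have hqf : ∀ z, q (f z) = z := fun z => by
    simp only [q, hΦ']
    rw [hn, Complex.exp_neg, mul_inv_cancel_right₀ (Complex.exp_ne_zero _)]
  let c : ↥(Ωᶜ) → Circle := fun x => ⟨q x / ‖q x‖, by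
    refine mem_sphere_zero_iff_norm.2 ?_
    rw [norm_div, Complex.norm_real, norm_norm,
      div_self (norm_ne_zero_iff.2 (hq0 x x.2))]⟩
  have hc : Continuous c := by
    refine Continuous.subtype_mk ?_ _
    refine Continuous.div (by fun_prop) (by fun_prop) fun x => ?_
    exact Complex.ofReal_ne_zero.2 (norm_ne_zero_iff.2 (hq0 x x.2))
  have hcf : ∀ z (hz : f z ∈ Ωᶜ), c ⟨f z, hz⟩ = z := fun z hz => by
    apply Circle.ext
    change q (f z) / ‖q (f z)‖ = z
    rw [hqf, Circle.norm_coe]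
    simp
  classical
  let k : ℂ → ℂ := fun x => if h : x ∈ Ωᶜ then f (c ⟨x, h⟩) else 0
  have hkc : ∀ x (h : x ∈ Ωᶜ), k x = f (c ⟨x, h⟩) := fun x h => dif_pos h
  have hk : ContinuousOn k Ωᶜ := by
    rw [continuousOn_iff_continuous_domRestrict]
    have : Ωᶜ.domRestrict k = fun x => f (c x) := by
      ext x
      exact hkc x x.2
    rw [this]
    exact hf.comp hc
  obtain ⟨r, hrc, hr1, hr2⟩ := jc_glue Ω hΩ id k continuousOn_id hk (by
    intro x hx
    have hx' := hΩf x hx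
    rw [← hr] at hx
    obtain ⟨z, rfl⟩ := hx
    rw [hkc _ hx', hcf, id])
  refine ⟨r, hrc, fun x => ?_, hr1⟩
  by_cases hx : x ∈ Ω
  · rw [hr1 x (subset_closure hx)]; exact subset_closure hx
  · rw [hr2 x hx, hkc x hx]
    exact frontier_subset_closure (hr ▸ ⟨_, rfl⟩)

lemma jc_contractible {E : Type*} [NormedAddCommGroup E] [NormedSpace ℝ E] (K : Set E)
    (r : E → E) (hr : Continuous r) (hrK : ∀ x, r x ∈ K)
    (hid : ∀ x ∈ K, r x = x) : ContractibleSpace K := by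
  rw [contractible_iff_id_nullhomotopic]
  let R : C(E, K) := ⟨fun x => ⟨r x, hrK x⟩, by fun_prop⟩
  let i : C(K, E) := ⟨Subtype.val, by fun_prop⟩
  have h := ((id_nullhomotopic E).comp_left i).comp_right R
  convert h
  ext x
  exact (hid x x.2).symm

/-- if `Ω ⊂ ℝ²` is a bounded open connected set whose boundary is a Jordan
curve, then the closure of `Ω` is path-connected and simply connected. -/
theorem stmt8 (Ω : Set (EuclideanSpace ℝ (Fin 2)))
    (hopen : IsOpen Ω) (hconn : IsConnected Ω) (hbdd : Bornology.IsBounded Ω)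
    (hJordan : IsJordanCurve (frontier Ω)) :
    IsPathConnected (closure Ω) ∧ SimplyConnectedSpace (closure Ω) := by
  suffices h : ContractibleSpace (closure Ω) from
    ⟨isPathConnected_iff_pathConnectedSpace.2 inferInstance, inferInstance⟩
  obtain ⟨f, hf, hinj, hrange⟩ := hJordan
  obtain ⟨a, ha⟩ := hconn.nonempty
  let T := Complex.orthonormalBasisOneI.repr
  let i : EuclideanSpace ℝ (Fin 2) ≃ᵢ ℂ :=
    T.symm.toIsometryEquiv.trans (IsometryEquiv.subRight (T.symm a))
  let e : EuclideanSpace ℝ (Fin 2) ≃ₜ ℂ := i.toHomeomorph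
  have hea : e a = 0 := by
    change T.symm a - T.symm a = 0
    simp
  let j : Circle → Metric.sphere (0 : EuclideanSpace ℝ (Fin 2)) 1 := fun z =>
    ⟨T (z : ℂ), mem_sphere_zero_iff_norm.2 ((T.norm_map _).trans (Circle.norm_coe z))⟩
  have hj : Continuous j := Continuous.subtype_mk (by fun_prop) _
  have hjinj : Function.Injective j := fun x y hxy =>
    Circle.ext (T.injective (congrArg Subtype.val hxy))
  have hjsurj : Function.Surjective j := fun y =>
    ⟨⟨T.symm y, mem_sphere_zero_iff_norm.2
      ((T.symm.norm_map _).trans (mem_sphere_zero_iff_norm.1 y.2))⟩, Subtype.ext (T.apply_symm_apply _)⟩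
  have hfr : range (fun z => e (f (j z))) = frontier (e '' Ω) := by
    rw [← e.image_frontier, ← hrange, ← range_comp]
    exact hjsurj.range_comp (e ∘ f)
  obtain ⟨r, hr, hr1, hr2⟩ := jc_retract (e '' Ω) (e.isOpenMap _ hopen)
    (i.isometry.lipschitz.isBounded_image hbdd) ⟨a, ha, hea⟩ (fun z => e (f (j z)))
    (e.continuous.comp (hf.comp hj)) (e.injective.comp (hinj.comp hjinj)) hfr
  rw [← e.image_closure] at hr1 hr2
  refine jc_contractible (closure Ω) (fun x => e.symm (r (e x)))
    (e.symm.continuous.comp (hr.comp e.continuous)) (fun x => ?_) (fun x hx => ?_)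
  · obtain ⟨y, hy, hye⟩ := hr1 (e x)
    rw [← hye, e.symm_apply_apply]; exact hy
  · rw [hr2 (e x) ⟨x, hx, rfl⟩, e.symm_apply_apply]
end

section
/- Let G = Ω \ ⋃_{i=1}^N cl(ω_i) be a planar domain with holes. Then the closure cl(G) is path-connected. -/
open Set Topology

/-- A nonvanishing continuous function on a contractible space has a continuous logarithm. -/
lemma exists_clog {A : Type*} [TopologicalSpace A] [ContractibleSpace A]
    [LocallyPathConnectedSpace A] (g : A → ℂ) (hg : Continuous g) (h0 : ∀ a, g a ≠ 0) :
    ∃ h : A → ℂ, Continuous h ∧ ∀ a, Complex.exp (h a) = g a := by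
  obtain ⟨a₀⟩ : Nonempty A := inferInstance
  obtain ⟨F, ⟨-, hF⟩, -⟩ := Complex.isCoveringMap_exp.existsUnique_continuousMap_lifts
    (⟨fun a => ⟨g a, h0 a⟩, by fun_prop⟩ : C(A, {z : ℂ // z ≠ 0})) a₀ (Complex.log (g a₀))
    (by ext; simp [Complex.exp_log (h0 a₀)])
  refine ⟨F, F.continuous, fun a => ?_⟩
  have := congrFun hF a
  simpa using congrArg Subtype.val this

abbrev E2 := EuclideanSpace ℝ (Fin 2)

/-- An identification of the plane with `ℂ`. -/
noncomputable def phi : E2 ≃ₗᵢ[ℝ] ℂ := Complex.orthonormalBasisOneI.repr.symm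

/-- There is no continuous nonvanishing function on the plane that equals `z - w` off a
bounded set. -/
lemma no_extension (g : E2 → ℂ) (hg : Continuous g) (h0 : ∀ a, g a ≠ 0) (w : E2) (R : ℝ)
    (hR : 0 < R) (hout : ∀ z, dist z w = R → g z = phi z - phi w) : False := by
  obtain ⟨h, hc, he⟩ := exists_clog g hg h0
  let z : ℝ → E2 := fun θ => phi.symm (phi w + R * Complex.exp (θ * Complex.I))
  have hz : Continuous z := by
    apply phi.symm.continuous.comp; fun_prop
  have hphi : ∀ θ, phi (z θ) - phi w = R * Complex.exp (θ * Complex.I) := by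
    intro θ; simp [z]
  have hgz : ∀ θ, g (z θ) = R * Complex.exp (θ * Complex.I) := by
    intro θ
    rw [hout, hphi]
    rw [← phi.dist_map, dist_eq_norm, hphi]
    simp [Complex.norm_exp_ofReal_mul_I, abs_of_pos hR]
  have key := Complex.isCoveringMap_exp.eq_of_comp_eq (g₁ := fun θ => h (z θ))
    (g₂ := fun θ : ℝ => h (z 0) + θ * Complex.I) (hc.comp hz) (by fun_prop)
    (by
      funext θ
      ext
      simp [Complex.exp_add, he, hgz]) 0 (by simp)
  have h2 := congrFun key (2 * Real.pi)
  have h3 : z (2 * Real.pi) = z 0 := by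
    simp [z, Complex.exp_two_pi_mul_I]
  simp [h3, Real.pi_ne_zero] at h2

/-- A bounded nonempty open set whose frontier has a logarithm of `z - w`: impossible. -/
lemma no_log (W : Set E2) (hW : IsOpen W) (hb : Bornology.IsBounded W) (w : E2) (hw : w ∈ W)
    (L : E2 → ℂ) (hL : ContinuousOn L (frontier W))
    (hexp : ∀ z ∈ frontier W, Complex.exp (L z) = phi z - phi w) : False := by
  classical
  obtain ⟨M, hM⟩ := ContinuousMap.exists_restrict_eq (isClosed_frontier (s := W))
    ⟨(frontier W).domRestrict L, hL.domRestrict⟩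
  have hML : ∀ z ∈ frontier W, M z = L z := fun z hz => by
    exact congrArg (fun f => f ⟨z, hz⟩) hM
  obtain ⟨R, hR0, hR⟩ := hb.subset_ball_lt 0 w
  refine no_extension (fun z => if z ∈ W then Complex.exp (M z) else phi z - phi w) ?_ ?_ w R hR0 ?_
  · refine Continuous.if ?_ ?_ ?_
    · intro a ha
      have ha' : a ∈ frontier W := ha
      rw [hML a ha', hexp a ha']
    · exact Complex.continuous_exp.comp M.continuous
    · exact phi.continuous.sub continuous_const
  · intro a
    split_ifs with h
    · exact Complex.exp_ne_zero _
    · rw [sub_ne_zero]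
      intro h'
      exact h (phi.injective h' ▸ hw)
  · intro z hz
    have : z ∉ W := fun h => by
      have := hR h
      rw [Metric.mem_ball, hz] at this
      exact lt_irrefl _ this
    simp [this]

/-- Each point of the Jordan frontier of a bounded open set is a limit of exterior points. -/
lemma frontier_sub (ω : Set E2) (ho : IsOpen ω) (hne : ω.Nonempty) (hb : Bornology.IsBounded ω)
    (hJ : IsJordanCurve (frontier ω)) : frontier ω ⊆ closure (closure ω)ᶜ := by
  obtain ⟨f, hf, hinj, hrange⟩ := hJ
  intro p hp
  rw [closure_compl]
  intro hpi
  obtain ⟨s, rfl⟩ : p ∈ range f := hrange ▸ hp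
  obtain ⟨w, hw⟩ := hne
  have hwf : ∀ s, f s ≠ w := fun s h => by
    have h1 : f s ∈ frontier ω := hrange ▸ mem_range_self s
    rw [ho.frontier_eq] at h1
    exact h1.2 (h ▸ hw)
  haveI : Fact (Module.finrank ℝ E2 = 1 + 1) := ⟨by simp⟩
  let e := stereographic' 1 s
  have hes : ∀ x, e.symm x ≠ s := fun x => by
    have := e.map_target (x := x) (by simp [e])
    simpa [e] using this
  have hcont : Continuous e.symm := by
    have := e.continuousOn_symm
    rwa [show e.target = univ from stereographic'_target s, continuousOn_univ] at this
  obtain ⟨l, hl, hle⟩ := exists_clog (fun x => phi (f (e.symm x)) - phi w)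
    ((phi.continuous.comp (hf.comp hcont)).sub continuous_const)
    (fun x => by
      rw [sub_ne_zero]
      exact fun h => hwf _ (phi.injective h))
  have hemb : IsClosedEmbedding f := hf.isClosedEmbedding hinj
  have hfr : frontier (interior (closure ω)) ⊆ range f \ {f s} := by
    intro z hz
    refine ⟨?_, ?_⟩
    · rw [hrange]
      exact frontier_closure_subset (frontier_interior_subset hz)
    · rintro rfl
      rw [isOpen_interior.frontier_eq] at hz
      exact hz.2 hpi
  let finv : E2 → Metric.sphere (0 : E2) 1 := Function.extend f id (fun _ => s)
  have hfinv : ∀ t, finv (f t) = t := fun t => hinj.extend_apply _ _ _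
  have hfc : ContinuousOn finv (range f) := by
    rw [continuousOn_iff_continuous_domRestrict]
    have : (range f).domRestrict finv = hemb.isEmbedding.toHomeomorph.symm := by
      funext ⟨x, t, ht⟩
      subst ht
      simp only [domRestrict_apply, hfinv]
      symm
      rw [Homeomorph.symm_apply_eq]
      rfl
    rw [this]
    exact Homeomorph.continuous _
  refine no_log (interior (closure ω)) isOpen_interior (hb.closure.subset interior_subset) w
    (interior_maximal subset_closure ho hw) (fun z => l (e (finv z))) ?_ ?_
  · refine hl.comp_continuousOn (e.continuousOn.comp (hfc.mono (hfr.trans diff_subset)) ?_)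
    intro z hz
    obtain ⟨⟨t, rfl⟩, h2⟩ := hfr hz
    rw [hfinv]
    simp only [e, stereographic'_source]
    exact fun h => h2 (by rw [h]; rfl)
  · intro z hz
    obtain ⟨⟨t, rfl⟩, h2⟩ := hfr hz
    rw [hle, hfinv, e.left_inv]
    simp only [e, stereographic'_source]
    exact fun h => h2 (by rw [h]; rfl)

/-- Stop a path the first time it hits a closed set. -/
lemma first_hit {X : Type*} [TopologicalSpace X] (F Y : Set X) (hF : IsClosed F) (x b : X)
    (hx : x ∉ F) (hb : b ∈ F) (hj : JoinedIn Y x b) :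
    ∃ y ∈ F, JoinedIn (Y ∩ closure Fᶜ) x y := by
  obtain ⟨γ, hγ⟩ := hj
  let T : Set unitInterval := {t | γ t ∈ F}
  have hT : IsCompact T := (hF.preimage γ.continuous).isCompact
  obtain ⟨t, ht, hmin⟩ := hT.exists_isLeast ⟨1, by simpa [T] using hb⟩
  have ht0 : 0 < t := by
    rcases eq_or_lt_of_le (unitInterval.nonneg' (t := t)) with h | h
    · exact absurd (by simpa [T, ← h] using ht) hx
    · exact h
  have hlt : ∀ s < t, γ s ∈ Fᶜ := fun s hs h => (not_le.2 hs) (hmin h)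
  have hle : ∀ s ≤ t, γ s ∈ closure Fᶜ := by
    intro s hs
    have hcl : s ∈ closure (Iio t) := by
      rw [closure_Iio' (a := t) ⟨(0 : unitInterval), ht0⟩]; exact hs
    exact map_mem_closure γ.continuous hcl hlt
  refine ⟨γ t, ht, ?_⟩
  refine ⟨⟨⟨fun s => γ (s * t), by fun_prop⟩, by simp, by simp⟩, fun s => ?_⟩
  exact ⟨hγ _, hle _ unitInterval.mul_le_right⟩

lemma IsJordanCurve.pathConn {C : Set E2} (h : IsJordanCurve C) : IsPathConnected C := by
  obtain ⟨f, hf, -, rfl⟩ := h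
  have : IsPathConnected (Metric.sphere (0 : E2) 1) :=
    isPathConnected_sphere (by simp [← Module.finrank_eq_rank]) 0 zero_le_one
  haveI := isPathConnected_iff_pathConnectedSpace.1 this
  exact isPathConnected_range hf

/-- Removing an open set with path-connected frontier. -/
lemma remove_hole (X V : Set E2) (hX : IsPathConnected X) (hV : IsOpen V)
    (hfr : IsPathConnected (frontier V)) (hsub : closure V ⊆ X) : IsPathConnected (X \ V) := by
  obtain ⟨b, hb, hbj⟩ := hfr
  have hfs : frontier V ⊆ X \ V := by
    rw [hV.frontier_eq]
    exact fun z hz => ⟨hsub hz.1, hz.2⟩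
  refine ⟨b, hfs hb, fun {x} hx => ?_⟩
  by_cases hxc : x ∈ closure V
  · exact (hbj (by rw [hV.frontier_eq]; exact ⟨hxc, hx.2⟩)).mono hfs
  · obtain ⟨y, hy, hj⟩ := first_hit (closure V) X isClosed_closure x b hxc
      (frontier_subset_closure hb) (hX.joinedIn x hx.1 b (hfs hb).1)
    have hsubs : X ∩ closure (closure V)ᶜ ⊆ X \ V := by
      rintro z ⟨h1, h2⟩
      refine ⟨h1, fun h3 => ?_⟩
      rw [closure_compl] at h2
      exact h2 (interior_maximal subset_closure hV h3)
    have hj' := hj.mono hsubs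
    have hyf : y ∈ frontier V := by
      rw [hV.frontier_eq]; exact ⟨hy, hj'.target_mem.2⟩
    exact ((hbj hyf).mono hfs).trans hj'.symm

lemma closure_pathConn (Ω : Set E2) (ho : IsOpen Ω) (hc : IsConnected Ω)
    (hfr : IsPathConnected (frontier Ω)) : IsPathConnected (closure Ω) := by
  have hΩ := ho.isConnected_iff_isPathConnected.1 hc
  obtain ⟨a, ha⟩ := hc.nonempty
  obtain ⟨b, hb⟩ := hfr.nonempty
  have hb' : b ∈ Ωᶜ := by rw [ho.frontier_eq] at hb; exact hb.2
  obtain ⟨y, hy, hj⟩ := first_hit Ωᶜ univ ho.isClosed_compl a b (by simpa using ha) hb'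
    (by simpa [joinedIn_univ] using PathConnectedSpace.joined a b)
  rw [compl_compl, univ_inter] at hj
  have hyf : y ∈ frontier Ω := by
    rw [ho.frontier_eq]; exact ⟨hj.target_mem, hy⟩
  refine ⟨a, subset_closure ha, fun {x} hx => ?_⟩
  by_cases h : x ∈ Ω
  · exact (hΩ.joinedIn a ha x h).mono subset_closure
  · exact hj.trans ((hfr.joinedIn y hyf x (by rw [ho.frontier_eq]; exact ⟨hx, h⟩)).mono
      frontier_subset_closure)

lemma remove_holes (X : Set E2) (hX : IsPathConnected X) {N : ℕ} (ω : Fin N → Set E2)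
    (hωopen : ∀ i, IsOpen (ω i)) (hfr : ∀ i, IsPathConnected (frontier (ω i)))
    (hsub : ∀ i, closure (ω i) ⊆ X)
    (hdisj : ∀ i j, i ≠ j → closure (ω i) ∩ closure (ω j) = ∅) (S : Finset (Fin N)) :
    IsPathConnected (X \ ⋃ i ∈ S, ω i) := by
  classical
  induction S using Finset.induction_on with
  | empty => simpa using hX
  | insert a S ha ih =>
    have := remove_hole _ (ω a) ih (hωopen a) (hfr a) (by
      intro z hz
      refine ⟨hsub a hz, ?_⟩
      simp only [mem_iUnion, not_exists]
      intro i hi hzi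
      have hne : a ≠ i := fun h => ha (h ▸ hi)
      have : z ∈ closure (ω a) ∩ closure (ω i) := ⟨hz, subset_closure hzi⟩
      rw [hdisj a i hne] at this
      exact this)
    rwa [sdiff_sdiff, union_comm, ← Finset.set_biUnion_insert] at this

/-- the closure of a planar domain with holes `G = Ω \ ⋃ᵢ cl(ωᵢ)` is
path-connected. -/
theorem stmt9 (Ω : Set (EuclideanSpace ℝ (Fin 2)))
    (hopen : IsOpen Ω) (hconn : IsConnected Ω) (hbdd : Bornology.IsBounded Ω)
    (hJordan : IsJordanCurve (frontier Ω))
    (N : ℕ) (ω : Fin N → Set (EuclideanSpace ℝ (Fin 2)))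
    (hωopen : ∀ i, IsOpen (ω i)) (hωconn : ∀ i, IsConnected (ω i))
    (hωbdd : ∀ i, Bornology.IsBounded (ω i))
    (hωJordan : ∀ i, IsJordanCurve (frontier (ω i)))
    (hsub : ∀ i, closure (ω i) ⊆ Ω)
    (hdisj : ∀ i j, i ≠ j → closure (ω i) ∩ closure (ω j) = ∅)
    (G : Set (EuclideanSpace ℝ (Fin 2))) (hG : G = Ω \ ⋃ i, closure (ω i)) :
    IsPathConnected (closure G) := by
  have hmain := remove_holes (closure Ω) (closure_pathConn Ω hopen hconn hJordan.pathConn) ω hωopen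
    (fun i => (hωJordan i).pathConn) (fun i => (hsub i).trans subset_closure) hdisj Finset.univ
  have heq : closure G = closure Ω \ ⋃ i ∈ (Finset.univ : Finset (Fin N)), ω i := by
    have hK : IsClosed (⋃ i, closure (ω i)) := isClosed_iUnion_of_finite fun i => isClosed_closure
    subst hG
    simp only [Finset.mem_univ, iUnion_true]
    apply Subset.antisymm
    · intro z hz
      refine ⟨closure_mono diff_subset hz, fun h => ?_⟩
      obtain ⟨y, hy1, hy2⟩ := mem_closure_iff.1 hz _ (isOpen_iUnion hωopen) h
      obtain ⟨i, hi⟩ := mem_iUnion.1 hy1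
      exact hy2.2 (mem_iUnion.2 ⟨i, subset_closure hi⟩)
    · rintro z ⟨hz, hzn⟩
      by_cases hzK : z ∈ ⋃ i, closure (ω i)
      · obtain ⟨i, hi⟩ := mem_iUnion.1 hzK
        have hzf : z ∈ frontier (ω i) := by
          rw [(hωopen i).frontier_eq]
          exact ⟨hi, fun h => hzn (mem_iUnion.2 ⟨i, h⟩)⟩
        have hzc := frontier_sub (ω i) (hωopen i) (hωconn i).nonempty (hωbdd i) (hωJordan i) hzf
        rw [mem_closure_iff] at hzc ⊢
        intro o ho hzo
        have hO : IsOpen (o ∩ (Ω ∩ (⋃ j : {j // j ≠ i}, closure (ω j))ᶜ)) :=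
          ho.inter (hopen.inter
            (isClosed_iUnion_of_finite fun j => isClosed_closure).isOpen_compl)
        obtain ⟨y, ⟨hyo, hyΩ, hyj⟩, hyi⟩ := hzc _ hO ⟨hzo, hsub i hi, fun h => by
          obtain ⟨⟨j, hj⟩, hzj⟩ := mem_iUnion.1 h
          have : z ∈ closure (ω j) ∩ closure (ω i) := ⟨hzj, hi⟩
          rw [hdisj j i hj] at this
          exact this⟩
        refine ⟨y, hyo, hyΩ, fun h => ?_⟩
        obtain ⟨j, hj⟩ := mem_iUnion.1 h
        by_cases hji : j = i
        · exact hyi (hji ▸ hj)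
        · exact hyj (mem_iUnion.2 ⟨⟨j, hji⟩, hj⟩)
      · rw [mem_closure_iff] at hz ⊢
        intro o ho hzo
        obtain ⟨y, ⟨hy1, hy2⟩, hy3⟩ := hz _ (ho.inter hK.isOpen_compl) ⟨hzo, hzK⟩
        exact ⟨y, hy1, hy3, hy2⟩
  rw [heq]
  exact hmain
end

section
/- Let G = Ω \ ⋃_{i=1}^N cl(ω_i) be a planar domain with holes. Then cl(G) is locally path-connected in the following quantitative sense: for every x ∈ cl(G) and every ε̄ > 0 there exists δ > 0 such that for every z ∈ cl(G) with |x − z| < δ there is a continuous path γ : [0,1] → cl(G) with γ(0) = x, γ(1) = z and |γ(t) − x| < ε̄ for all t ∈ [0,1]. -/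
open Set Topology in
lemma no_branch (F : ℂ → ℂ) (hF : Continuous F) (h0 : ∀ z, F z ≠ 0) (R : ℝ) (hR : 0 < R)
    (hFR : ∀ z : ℂ, ‖z‖ = R → F z = z) : False := by
  obtain ⟨h, ⟨-, hh⟩, -⟩ := Complex.isCoveringMapOn_exp.existsUnique_continuousMap_lifts
    (A := ℂ) ⟨F, hF⟩ (a₀ := 0) (e₀ := Complex.log (F 0)) (Complex.exp_log (h0 0))
    (fun a => h0 a)
  have hh' : ∀ z, Complex.exp (h z) = F z := fun z => congrFun hh z
  let φ : ℝ → ℂ := fun t => h (R * Complex.exp (t * Complex.I)) - t * Complex.I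
  have hφc : Continuous φ := by fun_prop
  have hφ : ∀ t, Complex.exp (φ t) = R := by
    intro t
    have h1 : ‖(R : ℂ) * Complex.exp (t * Complex.I)‖ = R := by
      rw [norm_mul, Complex.norm_exp_ofReal_mul_I, Complex.norm_real, mul_one,
        Real.norm_of_nonneg hR.le]
    simp only [φ]
    rw [Complex.exp_sub, hh', hFR _ h1, mul_div_assoc, div_self (Complex.exp_ne_zero _), mul_one]
  have := Complex.isCoveringMap_exp.const_of_comp hφc
    (fun a a' => Subtype.ext ((hφ a).trans (hφ a').symm)) (2 * Real.pi) 0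
  simp [φ, Complex.exp_two_pi_mul_I] at this

open Set Topology in
lemma frontier_subset_frontier_closure (ω : Set (EuclideanSpace ℝ (Fin 2)))
    (hopen : IsOpen ω) (hne : ω.Nonempty) (hbdd : Bornology.IsBounded ω)
    (hJ : IsJordanCurve (frontier ω)) : frontier ω ⊆ frontier (closure ω) := by
  intro x hx
  by_contra hxn
  obtain ⟨f, hf, hinj, hrange⟩ := hJ
  obtain ⟨p, hp⟩ := hne
  have hsub : frontier (closure ω) ⊆ frontier ω := frontier_closure_subset
  have hpn : ∀ s, f s ≠ p := by
    intro s hs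
    have : p ∈ frontier ω := by rw [← hrange, ← hs]; exact mem_range_self s
    rw [hopen.frontier_eq] at this
    exact this.2 hp
  obtain ⟨s0, rfl⟩ : x ∈ range f := by rw [hrange]; exact hx
  have : Fact (Module.finrank ℝ (EuclideanSpace ℝ (Fin 2)) = 1 + 1) := ⟨by simp⟩
  let σ := stereographic' 1 s0
  have hσsymm : Continuous σ.symm := by
    rw [← continuousOn_univ]
    have := σ.continuousOn_symm
    rwa [stereographic'_target] at this
  have hemb : IsClosedEmbedding f := hf.isClosedEmbedding hinj
  let C : Set (Metric.sphere (0 : EuclideanSpace ℝ (Fin 2)) 1) := f ⁻¹' frontier (closure ω)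
  have hC : IsClosed C := isClosed_frontier.preimage hf
  have hCs : C ⊆ σ.source := by
    intro s hs
    rw [stereographic'_source]
    rintro rfl
    exact hxn hs
  have hCemb : IsClosedEmbedding (fun s : C => f s) := hemb.comp hC.isClosedEmbedding_subtypeVal
  obtain ⟨Φ, hΦ⟩ := ContinuousMap.exists_extension' hCemb
    (⟨fun s : C => σ s, (σ.continuousOn.mono hCs).domRestrict⟩ : C(C, EuclideanSpace ℝ (Fin 1)))
  classical
  let g : EuclideanSpace ℝ (Fin 2) → EuclideanSpace ℝ (Fin 2) :=
    (closure ω).piecewise (fun z => f (σ.symm (Φ z)) - p) (fun z => z - p)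
  have hg : Continuous g := by
    refine Continuous.piecewise ?_ (by fun_prop) (by fun_prop)
    intro a ha
    obtain ⟨s, rfl⟩ : a ∈ range f := by rw [hrange]; exact hsub ha
    have h1 : Φ (f s) = σ s := congrFun hΦ ⟨s, ha⟩
    rw [h1, σ.left_inv (hCs ha)]
  have hg0 : ∀ z, g z ≠ 0 := by
    intro z
    by_cases hz : z ∈ closure ω
    · simp only [g, piecewise_eq_of_mem _ _ _ hz]
      exact sub_ne_zero.2 (hpn _)
    · simp only [g, piecewise_eq_of_notMem _ _ _ hz]
      refine sub_ne_zero.2 ?_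
      rintro rfl
      exact hz (subset_closure hp)
  obtain ⟨R, hR, hωR⟩ := hbdd.closure.subset_ball_lt 0 p
  let e := Complex.orthonormalBasisOneI.repr
  refine no_branch (fun z => e.symm (g (e z + p))) (by fun_prop) (fun z => ?_) R hR
    (fun z hz => ?_)
  · simpa using hg0 _
  · have : e z + p ∉ closure ω := by
      intro h
      have := hωR h
      simp [hz] at this
    simp [g, this]

open Set Topology in
lemma local_joined (G K : Set (EuclideanSpace ℝ (Fin 2))) (hG : IsOpen G)
    (hK : IsJordanCurve K) (hKG : K ⊆ closure G) (x : EuclideanSpace ℝ (Fin 2)) (hx : x ∈ K)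
    (hloc : ∃ r > 0, Metric.ball x r ∩ frontier G ⊆ K) (ε : ℝ) (hε : 0 < ε) :
    ∃ δ : ℝ, 0 < δ ∧ ∀ z ∈ closure G, ‖x - z‖ < δ →
      JoinedIn (closure G ∩ Metric.ball x ε) x z := by
  obtain ⟨r, hr, hloc⟩ := hloc
  obtain ⟨f, hf, hinj, rfl⟩ := hK
  obtain ⟨s0, rfl⟩ := hx
  have : Fact (Module.finrank ℝ (EuclideanSpace ℝ (Fin 2)) = 1 + 1) := ⟨by simp⟩
  have hlpc : LocallyPathConnectedSpace (Metric.sphere (0 : EuclideanSpace ℝ (Fin 2)) 1) :=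
    ChartedSpace.locallyPathConnectedSpace (EuclideanSpace ℝ (Fin 1)) _
  have hemb : IsClosedEmbedding f := hf.isClosedEmbedding hinj
  have hnh : f ⁻¹' Metric.ball (f s0) ε ∈ 𝓝 s0 :=
    hf.continuousAt.preimage_mem_nhds (Metric.ball_mem_nhds _ hε)
  obtain ⟨V, ⟨hV, hVpc⟩, hVs⟩ := (path_connected_basis s0).mem_iff.1 hnh
  simp only [id] at hVs
  rw [hemb.isInducing.nhds_eq_comap, Filter.mem_comap] at hV
  obtain ⟨U, hU, hUV⟩ := hV
  obtain ⟨δ, hδ, hδU⟩ := Metric.mem_nhds_iff.1 hU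
  have hs0 : s0 ∈ V := hUV (mem_preimage.2 (mem_of_mem_nhds hU))
  have key : ∀ y ∈ range f, dist y (f s0) < δ →
      JoinedIn (closure G ∩ Metric.ball (f s0) ε) (f s0) y := by
    rintro _ ⟨s, rfl⟩ hy
    have hs : s ∈ V := hUV (hδU hy)
    refine ((hVpc.joinedIn _ hs0 _ hs).map hf).mono ?_
    rintro _ ⟨t, ht, rfl⟩
    exact ⟨hKG (mem_range_self t), hVs ht⟩
  refine ⟨min (min δ ε) r, by positivity, ?_⟩
  intro z hz hzx
  rw [← dist_eq_norm, dist_comm, lt_min_iff, lt_min_iff] at hzx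
  obtain ⟨⟨hzδ, hzε⟩, hzr⟩ := hzx
  let c : ℝ → EuclideanSpace ℝ (Fin 2) := fun t => AffineMap.lineMap z (f s0) t
  have hc : Continuous c := AffineMap.lineMap_continuous
  have hcd : ∀ t ∈ Icc (0 : ℝ) 1, dist (c t) (f s0) ≤ dist z (f s0) := by
    intro t ht
    simp only [c, dist_lineMap_right]
    rw [Real.norm_of_nonneg (by linarith [ht.2])]
    nlinarith [ht.1, dist_nonneg (x := z) (y := f s0)]
  obtain ⟨t0, ⟨ht0, ht0K⟩, hmin⟩ :=
    (isCompact_Icc.inter_right (hemb.isClosed_range.preimage hc) :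
      IsCompact (Icc (0 : ℝ) 1 ∩ c ⁻¹' range f)).exists_isLeast ⟨1, by simp, by simp [c]⟩
  have hIco : ∀ t ∈ Ico 0 t0, c t ∉ frontier G := by
    intro t ht hfr
    have ht1 : t ∈ Icc (0 : ℝ) 1 := ⟨ht.1, ht.2.le.trans ht0.2⟩
    have := hmin ⟨ht1, hloc ⟨(hcd t ht1).trans_lt hzr, hfr⟩⟩
    exact absurd ht.2 (not_lt.2 this)
  have hclG : ∀ y ∈ closure G, y ∉ frontier G → y ∈ G := by
    intro y hy hn
    by_contra h
    exact hn (by rw [hG.frontier_eq]; exact ⟨hy, h⟩)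
  have hc0 : c 0 = z := by simp [c]
  have hsubG : ∀ t ∈ Icc 0 t0, c t ∈ closure G := by
    rcases ht0.1.eq_or_lt with h | h
    · intro t ht
      have : t = 0 := le_antisymm (h ▸ ht.2) ht.1
      rw [this, hc0]; exact hz
    · have h1 : c '' Ico 0 t0 ⊆ G := by
        refine (isPreconnected_Ico.image c hc.continuousOn).subset_of_closure_inter_subset hG ?_ ?_
        · have h00 : (0 : ℝ) ∈ Ico 0 t0 := ⟨le_rfl, h⟩
          exact ⟨c 0, mem_image_of_mem c h00, hclG _ (hc0 ▸ hz) (hIco 0 h00)⟩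
        · rintro _ ⟨hy, t, ht, rfl⟩
          exact hclG _ hy (hIco t ht)
      intro t ht
      rw [← closure_Ico h.ne] at ht
      exact closure_mono h1 (image_closure_subset_closure_image hc (mem_image_of_mem c ht))
  refine (key _ ht0K ((hcd t0 ht0).trans_lt hzδ)).trans (JoinedIn.symm ?_)
  refine JoinedIn.ofLine (f := fun s => c (s * t0)) (by fun_prop) (by simp [hc0]) (by simp) ?_
  rintro _ ⟨s, hs, rfl⟩
  have h1 : s * t0 ∈ Icc 0 t0 :=
    ⟨mul_nonneg hs.1 ht0.1, mul_le_of_le_one_left ht0.1 hs.2⟩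
  exact ⟨hsubG _ h1, (hcd _ ⟨h1.1, h1.2.trans ht0.2⟩).trans_lt hzε⟩

/-- the closure of a planar domain with holes `G = Ω \ ⋃ᵢ cl(ωᵢ)` is
locally path-connected, quantitatively: for every `x ∈ cl(G)` and `ε̄ > 0` there is a
`δ > 0` such that every `z ∈ cl(G)` with `|x − z| < δ` is joined to `x` by a continuous
path in `cl(G)` staying within distance `ε̄` of `x`. -/
theorem stmt10 (Ω : Set (EuclideanSpace ℝ (Fin 2)))
    (hopen : IsOpen Ω) (hconn : IsConnected Ω) (hbdd : Bornology.IsBounded Ω)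
    (hJordan : IsJordanCurve (frontier Ω))
    (N : ℕ) (ω : Fin N → Set (EuclideanSpace ℝ (Fin 2)))
    (hωopen : ∀ i, IsOpen (ω i)) (hωconn : ∀ i, IsConnected (ω i))
    (hωbdd : ∀ i, Bornology.IsBounded (ω i))
    (hωJordan : ∀ i, IsJordanCurve (frontier (ω i)))
    (hsub : ∀ i, closure (ω i) ⊆ Ω)
    (hdisj : ∀ i j, i ≠ j → closure (ω i) ∩ closure (ω j) = ∅)
    (G : Set (EuclideanSpace ℝ (Fin 2))) (hG : G = Ω \ ⋃ i, closure (ω i)) :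
    ∀ x ∈ closure G, ∀ ε : ℝ, 0 < ε → ∃ δ : ℝ, 0 < δ ∧
      ∀ z ∈ closure G, ‖x - z‖ < δ →
        ∃ γ : ℝ → EuclideanSpace ℝ (Fin 2),
          ContinuousOn γ (Set.Icc 0 1) ∧ γ 0 = x ∧ γ 1 = z ∧
          ∀ t ∈ Set.Icc (0 : ℝ) 1, γ t ∈ closure G ∧ ‖γ t - x‖ < ε := by
  intro x hx ε hε
  suffices H : ∃ δ : ℝ, 0 < δ ∧ ∀ z ∈ closure G, ‖x - z‖ < δ →
      JoinedIn (closure G ∩ Metric.ball x ε) x z by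
    obtain ⟨δ, hδ, H⟩ := H
    refine ⟨δ, hδ, fun z hz hzx => ?_⟩
    obtain ⟨γ, hγ⟩ := H z hz hzx
    refine ⟨γ.extend, γ.continuous_extend.continuousOn, γ.extend_zero, γ.extend_one, ?_⟩
    intro t ht
    rw [γ.extend_apply ht, ← dist_eq_norm]
    exact hγ ⟨t, ht⟩
  have hcl : IsClosed (⋃ i, closure (ω i)) := isClosed_iUnion_of_finite fun i => isClosed_closure
  have hGo : IsOpen G := hG ▸ hopen.sdiff hcl
  have hΩG : frontier Ω ⊆ closure G := by
    intro y hy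
    rw [hopen.frontier_eq] at hy
    have hyn : y ∈ (⋃ i, closure (ω i))ᶜ := fun h => by
      obtain ⟨i, hi⟩ := Set.mem_iUnion.1 h
      exact hy.2 (hsub i hi)
    rw [hG, Set.sdiff_eq, Set.inter_comm]
    exact hcl.isOpen_compl.inter_closure ⟨hyn, hy.1⟩
  have hoth : ∀ i, IsClosed (⋃ j : {j // j ≠ i}, closure (ω j.1)) := fun i =>
    isClosed_iUnion_of_finite fun j => isClosed_closure
  have hothn : ∀ i, ∀ y ∈ closure (ω i), y ∉ ⋃ j : {j // j ≠ i}, closure (ω j.1) := by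
    intro i y hy h
    obtain ⟨j, hj⟩ := Set.mem_iUnion.1 h
    have : y ∈ closure (ω j) ∩ closure (ω i) := ⟨hj, hy⟩
    rw [hdisj j i j.2] at this
    exact this
  have hωG : ∀ i, frontier (ω i) ⊆ closure G := by
    intro i y hy
    have h1 := frontier_subset_frontier_closure (ω i) (hωopen i) (hωconn i).nonempty (hωbdd i)
      (hωJordan i) hy
    rw [← frontier_compl, isClosed_closure.isOpen_compl.frontier_eq] at h1
    have hyc : y ∈ closure (ω i) := hy.1
    have h2 := (hopen.inter (hoth i).isOpen_compl).inter_closure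
      ⟨⟨hsub i hyc, hothn i y hyc⟩, h1.1⟩
    refine closure_mono ?_ h2
    rintro w ⟨⟨hw1, hw2⟩, hw3⟩
    rw [hG]
    refine ⟨hw1, fun h => ?_⟩
    obtain ⟨j, hj⟩ := Set.mem_iUnion.1 h
    by_cases hji : j = i
    · exact hw3 (hji ▸ hj)
    · exact hw2 (Set.mem_iUnion.2 ⟨⟨j, hji⟩, hj⟩)
  have hfrG : ∀ y ∈ frontier G, y ∈ frontier Ω ∨ ∃ i, y ∈ frontier (ω i) := by
    intro y hy
    rw [hGo.frontier_eq] at hy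
    by_cases hyΩ : y ∈ Ω
    · right
      have : y ∈ ⋃ i, closure (ω i) := by
        by_contra h
        exact hy.2 (hG ▸ ⟨hyΩ, h⟩)
      obtain ⟨i, hi⟩ := Set.mem_iUnion.1 this
      refine ⟨i, ?_⟩
      rw [(hωopen i).frontier_eq]
      refine ⟨hi, fun h => ?_⟩
      obtain ⟨w, hw1, hw2⟩ := mem_closure_iff.1 hy.1 _ (hωopen i) h
      rw [hG] at hw2
      exact hw2.2 (Set.mem_iUnion.2 ⟨i, subset_closure hw1⟩)
    · left
      rw [hopen.frontier_eq]
      refine ⟨closure_mono ?_ hy.1, hyΩ⟩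
      rw [hG]; exact Set.diff_subset
  by_cases hxG : x ∈ G
  · obtain ⟨r, hr, hrG⟩ := Metric.isOpen_iff.1 hGo x hxG
    refine ⟨min r ε, by positivity, fun z hz hzx => ?_⟩
    have hb : segment ℝ x z ⊆ Metric.ball x (min r ε) :=
      (convex_ball x _).segment_subset (Metric.mem_ball_self (by positivity))
        (by rwa [Metric.mem_ball, dist_comm, dist_eq_norm])
    refine JoinedIn.of_segment_subset fun w hw => ?_
    have := hb hw
    rw [Metric.mem_ball, lt_min_iff] at this
    exact ⟨subset_closure (hrG this.1), this.2⟩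
  · have hxf : x ∈ frontier G := by rw [hGo.frontier_eq]; exact ⟨hx, hxG⟩
    rcases hfrG x hxf with hxΩ | ⟨i, hi⟩
    · refine local_joined G (frontier Ω) hGo hJordan hΩG x hxΩ ?_ ε hε
      have hxn : x ∈ (⋃ i, closure (ω i))ᶜ := fun h => by
        obtain ⟨i, hi⟩ := Set.mem_iUnion.1 h
        rw [hopen.frontier_eq] at hxΩ
        exact hxΩ.2 (hsub i hi)
      obtain ⟨r, hr, hrb⟩ := Metric.isOpen_iff.1 hcl.isOpen_compl x hxn
      refine ⟨r, hr, ?_⟩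
      rintro y ⟨hy1, hy2⟩
      rcases hfrG y hy2 with h | ⟨i, h⟩
      · exact h
      · exact absurd (Set.mem_iUnion.2 ⟨i, h.1⟩) (hrb hy1)
    · refine local_joined G (frontier (ω i)) hGo (hωJordan i) (hωG i) x hi ?_ ε hε
      obtain ⟨r, hr, hrb⟩ := Metric.isOpen_iff.1 (hopen.inter (hoth i).isOpen_compl) x
        ⟨hsub i hi.1, hothn i x hi.1⟩
      refine ⟨r, hr, ?_⟩
      rintro y ⟨hy1, hy2⟩
      rcases hfrG y hy2 with h | ⟨j, h⟩
      · rw [hopen.frontier_eq] at h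
        exact absurd (hrb hy1).1 h.2
      · by_cases hji : j = i
        · exact hji ▸ h
        · exact absurd (Set.mem_iUnion.2 ⟨⟨j, hji⟩, h.1⟩) (hrb hy1).2
end

section
/- Let G = Ω \ ⋃_{i=1}^N cl(ω_i) be a planar domain with holes, and let Q : cl(G) → M₃(ℝ) be continuous with Q(x) ∈ 𝒬₂ for all x ∈ cl(G). Suppose that for each i ∈ {1,…,N} the restriction Q|_{∂ω_i} is orientable, i.e. there exists a continuous map m_i : ∂ω_i → 𝕊¹ ⊂ ℝ² with Q(x) = P((m_i(x),0)) for all x ∈ ∂ω_i. Then Q is orientable on cl(G): there exists a continuous map m : cl(G) → 𝕊¹ with Q(x) = P((m(x),0)) for all x ∈ cl(G). -/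
/-- `P(n) = s (n⊗n − (1/3) Id)`. -/
noncomputable def Pmat (s : ℝ) (n : Fin 3 → ℝ) : Matrix (Fin 3) (Fin 3) ℝ :=
  s • (Matrix.vecMulVec n n - (1 / 3 : ℝ) • (1 : Matrix (Fin 3) (Fin 3) ℝ))

namespace Aux

open Set Filter Topology

theorem exp_one_const (h : ℝ → ℂ) (hc : Continuous h) (h1 : ∀ t, Complex.exp (h t) = 1) (t : ℝ) :
    h t = h 0 := by
  obtain ⟨F, -, hu⟩ := Complex.isCoveringMapOn_exp.existsUnique_continuousMap_lifts
    (ContinuousMap.const ℝ (1 : ℂ)) (a₀ := 0) (e₀ := h 0) (by simp [h1]) (by simp)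
  have a := hu ⟨h, hc⟩ ⟨rfl, by ext t; simp [h1]⟩
  have b := hu (ContinuousMap.const ℝ (h 0)) ⟨rfl, by ext t; simp [h1]⟩
  exact congrArg (fun f : C(ℝ, ℂ) => f t) (a.trans b.symm)

theorem log_lift {X : Type*} [TopologicalSpace X] [SimplyConnectedSpace X]
    [LocallyPathConnectedSpace X] (g : X → ℂ) (hg : Continuous g) (h0 : ∀ x, g x ≠ 0) :
    ∃ φ : X → ℂ, Continuous φ ∧ ∀ x, g x = Complex.exp (φ x) := by
  obtain ⟨x0⟩ : Nonempty X := inferInstance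
  obtain ⟨F, ⟨-, hF⟩, -⟩ := Complex.isCoveringMapOn_exp.existsUnique_continuousMap_lifts
    (⟨g, hg⟩ : C(X, ℂ)) (a₀ := x0) (e₀ := Complex.log (g x0))
    (by simp [Complex.exp_log (h0 x0)]) (by simpa using h0)
  exact ⟨F, F.continuous, fun x => (congrFun hF x).symm⟩

theorem circle_degree (f : Circle → ℂ) (hf : Continuous f) (h0 : ∀ x, f x ≠ 0) :
    ∃ (n : ℤ) (α : C(Circle, ℂ)), ∀ w : Circle, f w = (w : ℂ) ^ n * Complex.exp (α w) := by
  obtain ⟨ψ, hψ, he⟩ := log_lift (fun t : ℝ => f (Circle.exp t)) (by fun_prop) (fun t => h0 _)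
  have hper : ∀ t, Circle.exp (t + 2 * Real.pi) = Circle.exp t := fun t => by
    rw [Circle.exp_add, Circle.exp_two_pi, mul_one]
  have hone : ∀ t, Complex.exp (ψ (t + 2 * Real.pi) - ψ t) = 1 := by
    intro t
    rw [Complex.exp_sub, ← he, ← he, hper, div_self (h0 _)]
  have hconst := exp_one_const (fun t => ψ (t + 2 * Real.pi) - ψ t) (by fun_prop) hone
  obtain ⟨n, hn⟩ := Complex.exp_eq_one_iff.1 (hone 0)
  have hψn : ∀ t, ψ (t + 2 * Real.pi) = ψ t + n * (2 * Real.pi * Complex.I) := by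
    intro t
    have := hconst t
    rw [hn] at this
    linear_combination this
  let β : C(ℝ, ℂ) := ⟨fun t => ψ t - n * (t * Complex.I), by fun_prop⟩
  have hβ : Function.Periodic β (2 * Real.pi) := by
    intro t
    simp only [β, ContinuousMap.coe_mk, hψn]
    push_cast
    ring
  have hq : IsQuotientMap (Circle.exp : C(ℝ, Circle)) :=
    Circle.isCoveringMap_exp.isQuotientMap Circle.exp_surjective
  have hfac : Function.FactorsThrough β (Circle.exp : C(ℝ, Circle)) := by
    intro a b hab
    obtain ⟨m, hm⟩ := Circle.exp_eq_exp.1 hab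
    rw [hm]
    exact hβ.int_mul m b
  refine ⟨n, hq.lift β hfac, fun w => ?_⟩
  obtain ⟨t, rfl⟩ := Circle.exp_surjective w
  have : hq.lift β hfac (Circle.exp t) = β t := by
    exact congrArg (fun f : C(ℝ, ℂ) => f t) (hq.lift_comp β hfac)
  rw [this, he, Circle.coe_exp, ← Complex.exp_int_mul, ← Complex.exp_add]
  congr 1
  simp only [β, ContinuousMap.coe_mk]
  ring

theorem curve_degree (γ : Circle → ℂ) (hγ : Continuous γ) (hinj : Function.Injective γ)
    (f : ℂ → ℂ) (hf : ContinuousOn f (range γ)) (h0 : ∀ x ∈ range γ, f x ≠ 0) :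
    ∃ (n : ℤ) (Φ : ℂ → ℂ), Continuous Φ ∧
      ∀ w : Circle, f (γ w) = (w : ℂ) ^ n * Complex.exp (Φ (γ w)) := by
  obtain ⟨n, α, hα⟩ := circle_degree (fun w => f (γ w))
    (hf.comp_continuous hγ (fun w => mem_range_self w)) (fun w => h0 _ (mem_range_self w))
  obtain ⟨g, hg⟩ := α.exists_extension' (hγ.isClosedEmbedding hinj)
  refine ⟨n, g, g.continuous, fun w => ?_⟩
  rw [hα w, ← congrFun hg w]
  rfl

theorem glue {X Y : Type*} [TopologicalSpace X] [TopologicalSpace Y] {S T : Set X}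
    (hS : IsClosed S) (hT : IsClosed T)
    {f g : X → Y} (hf : ContinuousOn f S) (hg : ContinuousOn g T)
    (hfg : ∀ x ∈ S, x ∈ T → f x = g x) :
    ∃ h : X → Y, ContinuousOn h (S ∪ T) ∧ (∀ x ∈ S, h x = f x) ∧ (∀ x ∈ T, h x = g x) := by
  classical
  have h1 : ∀ x ∈ S, S.piecewise f g x = f x := fun x hx => by simp [hx]
  have h2 : ∀ x ∈ T, S.piecewise f g x = g x := fun x hx => by
    by_cases hxS : x ∈ S
    · simp [hxS, hfg x hxS hx]
    · simp [hxS]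
  exact ⟨S.piecewise f g, (hf.congr h1).union_of_isClosed (hg.congr h2) hS hT, h1, h2⟩

theorem glue_univ {Y : Type*} [TopologicalSpace Y] {Ω : Set ℂ} (hΩ : IsOpen Ω)
    {f g : ℂ → Y} (hf : ContinuousOn f (closure Ω)) (hg : ContinuousOn g Ωᶜ)
    (hfg : ∀ x ∈ frontier Ω, f x = g x) :
    ∃ h : ℂ → Y, Continuous h ∧ (∀ x ∈ closure Ω, h x = f x) ∧ (∀ x ∈ Ωᶜ, h x = g x) := by
  obtain ⟨h, hc, h1, h2⟩ := glue isClosed_closure hΩ.isClosed_compl hf hg (fun x hx hx' =>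
    hfg x (by rw [hΩ.frontier_eq]; exact ⟨hx, hx'⟩))
  refine ⟨h, ?_, h1, h2⟩
  rw [← continuousOn_univ]
  refine hc.mono fun x _ => ?_
  by_cases hx : x ∈ Ω
  · exact Or.inl (subset_closure hx)
  · exact Or.inr hx

theorem no_log (p : ℂ) (l : ℤ) (φ : ℂ → ℂ) (hφ : Continuous φ) (R : ℝ) (hR : 0 < R)
    (h : ∀ z, ‖z - p‖ = R → (z - p) ^ l = Complex.exp (φ z)) : l = 0 := by
  have hR' : (R : ℂ) ≠ 0 := by exact_mod_cast hR.ne'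
  have key : ∀ t : ℝ, Complex.exp (φ (p + R * Complex.exp (t * Complex.I))
      - l * (Complex.log R + t * Complex.I)) = 1 := by
    intro t
    rw [Complex.exp_sub, ← h, Complex.exp_int_mul, Complex.exp_add, Complex.exp_log hR']
    · rw [add_sub_cancel_left, div_self]
      exact zpow_ne_zero _ (mul_ne_zero hR' (Complex.exp_ne_zero _))
    · rw [add_sub_cancel_left, norm_mul, Complex.norm_exp_ofReal_mul_I]
      simp [abs_of_pos hR]
  have hc := exp_one_const _ (by fun_prop) key (2 * Real.pi)
  simp only [Complex.ofReal_zero, zero_mul, Complex.exp_zero] at hc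
  push_cast at hc
  rw [Complex.exp_two_pi_mul_I] at hc
  have h2 : (l : ℂ) * (2 * Real.pi * Complex.I) = 0 := by linear_combination -hc
  simpa [Real.pi_ne_zero] using h2

theorem jordan_log (Ω : Set ℂ) (hΩ : IsOpen Ω) (hb : Bornology.IsBounded Ω) (p : ℂ) (hp : p ∈ Ω)
    (γ : Circle → ℂ) (hγ : Continuous γ) (hinj : Function.Injective γ)
    (hr : range γ = frontier Ω) (q : ℂ → ℂ) (hq : ContinuousOn q (closure Ω))
    (hq0 : ∀ x ∈ closure Ω, q x ≠ 0) :
    ∃ φ : ℂ → ℂ, Continuous φ ∧ ∀ x ∈ closure Ω, q x = Complex.exp (φ x) := by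
  have hfc : frontier Ω ⊆ closure Ω := frontier_subset_closure
  have hpn : ∀ x ∈ Ωᶜ, x - p ≠ 0 := fun x hx h => hx (by rwa [sub_eq_zero.1 h])
  have hfr : ∀ x ∈ frontier Ω, x ∈ Ωᶜ := fun x hx => by
    rw [hΩ.frontier_eq] at hx; exact hx.2
  obtain ⟨k, α, hα, hk⟩ := curve_degree γ hγ hinj (fun z => z - p) (by fun_prop)
    (fun x hx => hpn x (hfr x (hr ▸ hx)))
  obtain ⟨l, β, hβ, hl⟩ := curve_degree γ hγ hinj q (hq.mono (hr ▸ hfc))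
    (fun x hx => hq0 x (hfc (hr ▸ hx)))
  -- glue `q ^ k * exp (l α - k β)` with `(z - p) ^ l`
  obtain ⟨g, hg, hg1, hg2⟩ := glue_univ hΩ
    (f := fun z => q z ^ k * Complex.exp (l * α z - k * β z)) (g := fun z => (z - p) ^ l)
    (by
      refine ContinuousOn.mul (hq.zpow₀ k fun a ha => Or.inl (hq0 a ha)) ?_
      exact Continuous.continuousOn (by fun_prop))
    (ContinuousOn.zpow₀ (by fun_prop) l fun a ha => Or.inl (hpn a ha))
    (by
      intro x hx
      rw [← hr] at hx
      obtain ⟨w, rfl⟩ := hx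
      have h1 := hk w
      rw [h1, hl w, mul_zpow, mul_zpow, ← Complex.exp_int_mul, ← Complex.exp_int_mul, ← zpow_mul,
        ← zpow_mul, mul_assoc, ← Complex.exp_add, mul_comm l k]
      congr 2
      ring)
  obtain ⟨φ, hφ, hφe⟩ := log_lift g hg (by
    intro x
    by_cases hx : x ∈ Ω
    · rw [hg1 x (subset_closure hx)]
      exact mul_ne_zero (zpow_ne_zero _ (hq0 x (subset_closure hx))) (Complex.exp_ne_zero _)
    · rw [hg2 x hx]
      exact zpow_ne_zero _ (hpn x hx))
  obtain ⟨R, hR, hRb⟩ := hb.subset_ball_lt 0 p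
  have hl0 : l = 0 := no_log p l φ hφ R hR (by
    intro z hz
    have : z ∈ Ωᶜ := fun h => by
      have := hRb h
      rw [Metric.mem_ball, dist_eq_norm] at this
      linarith
    rw [← hφe, hg2 z this])
  subst hl0
  obtain ⟨g, hg, hg1, hg2⟩ := glue_univ hΩ (f := q) (g := fun z => Complex.exp (β z)) hq
    (by fun_prop) (by
      intro x hx
      rw [← hr] at hx
      obtain ⟨w, rfl⟩ := hx
      simpa using hl w)
  obtain ⟨φ, hφ, hφe⟩ := log_lift g hg (by
    intro x
    by_cases hx : x ∈ Ω
    · rw [hg1 x (subset_closure hx)]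
      exact hq0 x (subset_closure hx)
    · rw [hg2 x hx]
      exact Complex.exp_ne_zero _)
  exact ⟨φ, hφ, fun x hx => by rw [← hφe, hg1 x hx]⟩

/-- smooth approximation with finitely many zeros on a compact set -/
theorem approx_finite (K : Set ℂ) (hK : IsCompact K) (M : ℂ → ℂ) (hM : Continuous M) (δ : ℝ)
    (hδ : 0 < δ) : ∃ P : ℂ → ℂ, Continuous P ∧ (∀ x, ‖P x - M x‖ < δ) ∧
      (K ∩ P ⁻¹' {0}).Finite := by
  obtain ⟨P, hP, hPM, -⟩ := hM.exists_contDiff_approx 1 (ε := fun _ => δ / 2) (by fun_prop)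
    (fun _ => by positivity)
  have hd : ∀ x, HasFDerivAt P (fderiv ℝ P x) x := fun x =>
    (hP.differentiable (by simp) x).hasFDerivAt
  have hS := MeasureTheory.addHaar_image_eq_zero_of_det_fderivWithin_eq_zero
    (s := {x | (fderiv ℝ P x).det = 0}) (f := P) (f' := fderiv ℝ P) MeasureTheory.volume
    (fun x _ => (hd x).hasFDerivWithinAt) (fun x hx => hx)
  obtain ⟨c, hc, hcn⟩ : ∃ c ∈ Metric.ball (0 : ℂ) (δ / 2),
      c ∉ P '' {x | (fderiv ℝ P x).det = 0} := by
    by_contra! hcon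
    have h1 := MeasureTheory.measure_mono (μ := MeasureTheory.volume)
      (show Metric.ball (0 : ℂ) (δ / 2) ⊆ P '' {x | (fderiv ℝ P x).det = 0} from hcon)
    rw [hS] at h1
    have h2 := Metric.measure_ball_pos MeasureTheory.volume (0 : ℂ) (half_pos hδ)
    exact absurd h1 (not_le.2 h2)
  refine ⟨fun x => P x - c, by have := hP.continuous; fun_prop, fun x => ?_, ?_⟩
  · have h1 := hPM x
    rw [dist_eq_norm] at h1
    rw [mem_ball_zero_iff] at hc
    calc ‖P x - c - M x‖ = ‖(P x - M x) - c‖ := by congr 1; ring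
      _ ≤ ‖P x - M x‖ + ‖c‖ := norm_sub_le _ _
      _ < δ := by linarith
  · by_contra hinf
    obtain ⟨x, hx, hacc⟩ := Set.Infinite.exists_accPt_of_subset_isCompact hinf hK
      inter_subset_left
    rw [accPt_iff_frequently_nhdsNE] at hacc
    refine hacc ?_
    have : ∀ᶠ z in 𝓝[≠] x, P z ≠ c := by
      by_cases hPx : P x = c
      · have hdet : (fderiv ℝ P x).det ≠ 0 := fun h => hcn ⟨x, h, hPx⟩
        refine (hd x).eventually_ne ?_
        let e := (fderiv ℝ P x).toContinuousLinearEquivOfDetNeZero hdet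
        exact ⟨_, e.antilipschitz⟩
      · exact (hP.continuous.continuousAt.eventually_ne hPx).filter_mono nhdsWithin_le_nhds
    filter_upwards [this] with z hz hz'
    exact hz (sub_eq_zero.1 hz'.2)

theorem fill_finite (ω : Set ℂ) (hω : IsOpen ω) (hb : Bornology.IsBounded ω) :
    ∀ (n : ℕ) (f : ℂ → ℂ), Continuous f → (∀ x ∈ frontier ω, f x ≠ 0) →
      (closure ω ∩ f ⁻¹' {0}).Finite → (closure ω ∩ f ⁻¹' {0}).ncard = n →
      ∃ ρ e : ℂ → ℂ, ContinuousOn ρ ωᶜ ∧ (∀ x ∈ ωᶜ, ρ x ≠ 0) ∧ ContinuousOn e (closure ω) ∧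
        (∀ x ∈ closure ω, e x ≠ 0) ∧ ∀ x ∈ frontier ω, f x = ρ x * e x := by
  intro n
  induction n with
  | zero =>
    intro f hf _ hfin hn
    rw [Set.ncard_eq_zero hfin] at hn
    refine ⟨fun _ => 1, f, by fun_prop, by simp, hf.continuousOn, fun x hx h => ?_, by simp⟩
    have : x ∈ closure ω ∩ f ⁻¹' {0} := ⟨hx, h⟩
    rw [hn] at this
    exact this
  | succ n ih =>
    intro f hf hf0 hfin hn
    obtain ⟨z0, hz0⟩ : (closure ω ∩ f ⁻¹' {0}).Nonempty := by
      rw [← Set.ncard_pos hfin]; omega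
    have hfrsub : ∀ x ∈ frontier ω, x ∈ ωᶜ := fun x hx => by
      rw [hω.frontier_eq] at hx; exact hx.2
    have hz0ω : z0 ∈ ω := by
      by_contra hcon
      exact hf0 z0 (by rw [hω.frontier_eq]; exact ⟨hz0.1, hcon⟩) hz0.2
    -- a small closed ball
    have hnhd : ω \ ((closure ω ∩ f ⁻¹' {0}) \ {z0}) ∈ 𝓝 z0 := by
      refine IsOpen.mem_nhds (hω.sdiff (hfin.subset sdiff_subset).isClosed) ⟨hz0ω, by simp⟩
    obtain ⟨ε, hε, hball⟩ := Metric.nhds_basis_closedBall.mem_iff.1 hnhd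
    have hεc : (ε : ℂ) ≠ 0 := by exact_mod_cast hε.ne'
    let γ : Circle → ℂ := fun w => z0 + ε * w
    have hγr : range γ = Metric.sphere z0 ε := by
      ext z
      constructor
      · rintro ⟨w, rfl⟩
        have hw : ‖(w : ℂ)‖ = 1 := w.norm_coe
        simp [γ, abs_of_pos hε, hw]
      · intro hz
        rw [mem_sphere_iff_norm] at hz
        refine ⟨⟨(z - z0) / ε, ?_⟩, ?_⟩
        · rw [Submonoid.unitSphere, ← SetLike.mem_coe]
          simp [hz, abs_of_pos hε, hε.ne']
        · simp only [γ]
          field_simp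
          ring
    have hne : ∀ z ∈ Metric.closedBall z0 ε, z ≠ z0 → f z ≠ 0 := fun z hz hzz h =>
      (hball hz).2 ⟨⟨subset_closure (hball hz).1, h⟩, hzz⟩
    have hsne : ∀ z ∈ Metric.sphere z0 ε, z ≠ z0 := fun z hz h => by
      rw [h] at hz; simp at hz; exact hε.ne hz
    obtain ⟨k, Φ, hΦ, hk⟩ := curve_degree γ (by fun_prop)
      (by intro a b hab; exact Circle.ext (by simpa [γ, hεc] using hab)) f hf.continuousOn
      (fun z hz => hne z (Metric.sphere_subset_closedBall (hγr ▸ hz)) (hsne z (hγr ▸ hz)))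
    have hfrb : frontier (Metric.ball z0 ε) = Metric.sphere z0 ε := frontier_ball z0 hε.ne'
    have hnz : ∀ z ∈ (Metric.ball z0 ε)ᶜ, z - z0 ≠ 0 := fun z hz h => by
      rw [sub_eq_zero.1 h] at hz; simp at hz; linarith
    obtain ⟨f', hf', h1, h2⟩ := glue_univ (Metric.isOpen_ball (x := z0) (ε := ε))
      (f := fun z => (ε : ℂ) ^ (-k) * Complex.exp (Φ z)) (g := fun z => f z * (z - z0) ^ (-k))
      (Continuous.continuousOn (by fun_prop))
      (hf.continuousOn.mul (ContinuousOn.zpow₀ (by fun_prop) _ fun a ha => Or.inl (hnz a ha)))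
      (by
        intro x hx
        rw [hfrb, ← hγr] at hx
        obtain ⟨w, rfl⟩ := hx
        rw [hk w]
        simp only [γ, add_sub_cancel_left]
        rw [mul_zpow]
        have : (w : ℂ) ^ k * (w : ℂ) ^ (-k) = 1 := by
          rw [← zpow_add₀ w.coe_ne_zero]; simp
        linear_combination (- (ε : ℂ) ^ (-k) * Complex.exp (Φ (z0 + ε * w))) * this)
    rw [closure_ball z0 hε.ne'] at h1
    have hzeros : closure ω ∩ f' ⁻¹' {0} = (closure ω ∩ f ⁻¹' {0}) \ {z0} := by
      ext z
      by_cases hz : z ∈ Metric.closedBall z0 ε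
      · constructor
        · rintro ⟨_, hzz⟩
          exfalso
          have hzz' : f' z = 0 := hzz
          rw [h1 z hz] at hzz'
          exact mul_ne_zero (zpow_ne_zero _ hεc) (Complex.exp_ne_zero _) hzz'
        · rintro ⟨⟨_, hzz⟩, hzn⟩
          exact absurd hzz (hne z hz hzn)
      · have hz' : z ∈ (Metric.ball z0 ε)ᶜ := fun h => hz (Metric.ball_subset_closedBall h)
        have := hnz z hz'
        have h3 : z ≠ z0 := fun h => this (sub_eq_zero.2 h)
        have h4 : f' z = 0 ↔ f z = 0 := by
          rw [h2 z hz', mul_eq_zero]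
          simp [zpow_ne_zero _ this]
        simp [h4, h3]
    have hfrbc : ∀ x ∈ ωᶜ, x ∈ (Metric.ball z0 ε)ᶜ := fun x hx h =>
      hx (hball (Metric.ball_subset_closedBall h)).1
    obtain ⟨ρ, e, hρ, hρ0, he, he0, hfe⟩ := ih f' hf' (by
        intro x hx
        have hx' := hfrbc x (hfrsub x hx)
        rw [h2 x hx']
        exact mul_ne_zero (hf0 x hx) (zpow_ne_zero _ (hnz x hx')))
      (by rw [hzeros]; exact hfin.subset sdiff_subset)
      (by rw [hzeros, Set.ncard_sdiff_singleton_of_mem hz0, hn]; simp)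
    refine ⟨fun z => ρ z * (z - z0) ^ k, e, ?_, ?_, he, he0, ?_⟩
    · exact hρ.mul (ContinuousOn.zpow₀ (by fun_prop) _ fun a ha => Or.inl (hnz a (hfrbc a ha)))
    · exact fun x hx => mul_ne_zero (hρ0 x hx) (zpow_ne_zero _ (hnz x (hfrbc x hx)))
    · intro x hx
      have hx' := hfrbc x (hfrsub x hx)
      have h5 := hfe x hx
      rw [h2 x hx'] at h5
      have : (x - z0) ^ (-k) * (x - z0) ^ k = 1 := by
        rw [← zpow_add₀ (hnz x hx')]; simp
      linear_combination (x - z0) ^ k * h5 - f x * this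

theorem tietze {S : Set ℂ} (hS : IsClosed S) (f : ℂ → ℂ) (hf : ContinuousOn f S) :
    ∃ g : ℂ → ℂ, Continuous g ∧ ∀ x ∈ S, g x = f x := by
  obtain ⟨g, hg⟩ := ContinuousMap.exists_restrict_eq hS
    (⟨fun x : S => f x, continuousOn_iff_continuous_domRestrict.1 hf⟩ : C(S, ℂ))
  exact ⟨g, g.continuous, fun x hx => congrArg (fun h : C(S, ℂ) => h ⟨x, hx⟩) hg⟩

theorem fill (ω : Set ℂ) (hω : IsOpen ω) (hb : Bornology.IsBounded ω) (m : ℂ → ℂ)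
    (hm : ContinuousOn m (frontier ω)) (hm0 : ∀ x ∈ frontier ω, ‖m x‖ = 1) :
    ∃ ρ e : ℂ → ℂ, ContinuousOn ρ ωᶜ ∧ (∀ x ∈ ωᶜ, ρ x ≠ 0) ∧ ContinuousOn e (closure ω) ∧
        (∀ x ∈ closure ω, e x ≠ 0) ∧ ∀ x ∈ frontier ω, m x = ρ x * e x := by
  obtain ⟨M, hM, hMm⟩ := tietze isClosed_frontier m hm
  obtain ⟨P, hP, hPM, hfin⟩ := approx_finite (closure ω) hb.isCompact_closure M hM 1 one_pos
  have hmne : ∀ x ∈ frontier ω, m x ≠ 0 := fun x hx h => by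
    have := hm0 x hx; simp [h] at this
  have hslit : ∀ x ∈ frontier ω, P x / m x ∈ Complex.slitPlane := by
    intro x hx
    have h1 : ‖P x / m x - 1‖ < 1 := by
      have : P x / m x - 1 = (P x - M x) / m x := by
        rw [hMm x hx]; field_simp [hmne x hx]
      rw [this, norm_div, hm0 x hx, div_one]
      exact hPM x
    have h2 := Complex.mem_slitPlane_of_norm_lt_one h1
    simpa using h2
  obtain ⟨φ, hφ, hφe⟩ := tietze isClosed_frontier (fun x => Complex.log (P x / m x))
    ((hP.continuousOn.div hm hmne).clog hslit)
  have hP0 : ∀ x ∈ frontier ω, P x ≠ 0 := fun x hx h => by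
    have := hslit x hx
    simp [h] at this
  obtain ⟨ρ, e, hρ, hρ0, he, he0, hfe⟩ := fill_finite ω hω hb _ P hP hP0 hfin rfl
  refine ⟨ρ, fun x => e x * Complex.exp (-φ x), hρ, hρ0, he.mul ?_, ?_, ?_⟩
  · exact Continuous.continuousOn (by fun_prop)
  · exact fun x hx => mul_ne_zero (he0 x hx) (Complex.exp_ne_zero _)
  · intro x hx
    rw [← mul_assoc, ← hfe x hx, hφe x hx, Complex.exp_neg,
      Complex.exp_log (div_ne_zero (hP0 x hx) (hmne x hx)), inv_div,
      mul_div_cancel₀ _ (hP0 x hx)]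

theorem main_C (Ω : Set ℂ) (hΩ : IsOpen Ω) (hb : Bornology.IsBounded Ω) (hne : Ω.Nonempty)
    (γ : Circle → ℂ) (hγ : Continuous γ) (hinj : Function.Injective γ)
    (hr : range γ = frontier Ω)
    (N : ℕ) (ω : Fin N → Set ℂ) (hω : ∀ i, IsOpen (ω i)) (hωb : ∀ i, Bornology.IsBounded (ω i))
    (hdisj : ∀ i j, i ≠ j → closure (ω i) ∩ closure (ω j) = ∅)
    (hsub : ∀ i, closure (ω i) ⊆ Ω)
    (q : ℂ → ℂ) (hq : ContinuousOn q (closure Ω \ ⋃ i, ω i))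
    (hq0 : ∀ x ∈ closure Ω \ ⋃ i, ω i, q x ≠ 0)
    (m : Fin N → ℂ → ℂ) (hm : ∀ i, ContinuousOn (m i) (frontier (ω i)))
    (hm1 : ∀ i, ∀ x ∈ frontier (ω i), ‖m i x‖ = 1)
    (hmq : ∀ i, ∀ x ∈ frontier (ω i), m i x ^ 2 = q x) :
    ∃ s : ℂ → ℂ, ContinuousOn s (closure Ω \ ⋃ i, ω i) ∧
      ∀ x ∈ closure Ω \ ⋃ i, ω i, s x ^ 2 = q x := by
  classical
  choose ρ e hρ hρ0 he he0 hme using fun i => fill (ω i) (hω i) (hωb i) (m i) (hm i) (hm1 i)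
  set A := closure Ω \ ⋃ i, ω i with hA
  have hAcl : IsClosed A := isClosed_closure.sdiff (isOpen_iUnion hω)
  have hAω : ∀ i, A ⊆ (ω i)ᶜ := fun i x hx h => hx.2 (mem_iUnion.2 ⟨i, h⟩)
  have hclω : ∀ i j, j ≠ i → closure (ω i) ⊆ (ω j)ᶜ := fun i j hij x hx h => by
    have : x ∈ closure (ω i) ∩ closure (ω j) := ⟨hx, subset_closure h⟩
    rw [hdisj i j hij.symm] at this
    exact this
  let Pr : ℂ → ℂ := fun x => ∏ j, ρ j x
  have hPr : ContinuousOn Pr A := continuousOn_finsetProd _ fun j _ => (hρ j).mono (hAω j)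
  have hPr0 : ∀ x ∈ A, Pr x ≠ 0 := fun x hx => Finset.prod_ne_zero_iff.2 fun j _ =>
    hρ0 j x (hAω j hx)
  let g : ℂ → ℂ := fun x => q x / Pr x ^ 2
  let gi : Fin N → ℂ → ℂ := fun i x => e i x ^ 2 / (∏ j ∈ Finset.univ.erase i, ρ j x) ^ 2
  have hpr0 : ∀ i, ∀ x ∈ closure (ω i), ∏ j ∈ Finset.univ.erase i, ρ j x ≠ 0 := fun i x hx =>
    Finset.prod_ne_zero_iff.2 fun j hj => hρ0 j x (hclω i j (Finset.ne_of_mem_erase hj) hx)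
  let F : ℂ → ℂ := fun x => if h : ∃ i, x ∈ ω i then gi h.choose x else g x
  have hFA : ∀ x ∈ A, F x = g x := by
    intro x hx
    have : ¬ ∃ i, x ∈ ω i := fun ⟨i, hi⟩ => hAω i hx hi
    simp [F, this]
  have hfrA : ∀ i, frontier (ω i) ⊆ A := by
    intro i x hx
    refine ⟨subset_closure (hsub i (frontier_subset_closure hx)), ?_⟩
    rw [mem_iUnion]
    rintro ⟨j, hj⟩
    by_cases hij : j = i
    · subst hij
      rw [(hω j).frontier_eq] at hx
      exact hx.2 hj
    · exact hclω i j hij (frontier_subset_closure hx) hj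
  have hFi : ∀ i, ∀ x ∈ closure (ω i), F x = gi i x := by
    intro i x hx
    by_cases hxi : x ∈ ω i
    · have hex : ∃ i, x ∈ ω i := ⟨i, hxi⟩
      have hch : hex.choose = i := by
        by_contra hcon
        exact hclω i _ hcon hx hex.choose_spec
      simp only [F, hex, dif_pos]
      rw [hch]
    · have hxf : x ∈ frontier (ω i) := by rw [(hω i).frontier_eq]; exact ⟨hx, hxi⟩
      rw [hFA x (hfrA i hxf)]
      have h1 : Pr x = ρ i x * ∏ j ∈ Finset.univ.erase i, ρ j x :=
        (Finset.mul_prod_erase Finset.univ (fun j => ρ j x) (Finset.mem_univ i)).symm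
      have h2 := hpr0 i x hx
      have h3 := hρ0 i x hxi
      simp only [g, gi]
      rw [h1, ← hmq i x hxf, hme i x hxf]
      field_simp
  have hFc : ContinuousOn F (A ∪ ⋃ i, closure (ω i)) := by
    refine ContinuousOn.union_of_isClosed ?_ ?_ hAcl
      (isClosed_iUnion_of_finite fun i => isClosed_closure)
    · exact (hq.div (hPr.pow 2) fun x hx => pow_ne_zero _ (hPr0 x hx)).congr hFA
    · refine (locallyFinite_of_finite _).continuousOn_iUnion (fun i => isClosed_closure) fun i => ?_
      refine ContinuousOn.congr ?_ (hFi i)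
      refine ((he i).pow 2).div (ContinuousOn.pow (continuousOn_finsetProd _ fun j hj => ?_) 2)
        fun x hx => pow_ne_zero _ (hpr0 i x hx)
      exact (hρ j).mono (hclω i j (Finset.ne_of_mem_erase hj))
  have hcov : closure Ω ⊆ A ∪ ⋃ i, closure (ω i) := by
    intro x hx
    by_cases h : x ∈ ⋃ i, ω i
    · right
      obtain ⟨i, hi⟩ := mem_iUnion.1 h
      exact mem_iUnion.2 ⟨i, subset_closure hi⟩
    · exact Or.inl ⟨hx, h⟩
  obtain ⟨p, hp⟩ := hne
  obtain ⟨φ, hφ, hφe⟩ := jordan_log Ω hΩ hb p hp γ hγ hinj hr F (hFc.mono hcov) (by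
    intro x hx
    rcases hcov hx with h | h
    · rw [hFA x h]
      exact div_ne_zero (hq0 x h) (pow_ne_zero _ (hPr0 x h))
    · obtain ⟨i, hi⟩ := mem_iUnion.1 h
      rw [hFi i x hi]
      exact div_ne_zero (pow_ne_zero _ (he0 i x hi)) (pow_ne_zero _ (hpr0 i x hi)))
  refine ⟨fun x => Complex.exp (φ x / 2) * Pr x, ContinuousOn.mul ?_ hPr, fun x hx => ?_⟩
  · exact Continuous.continuousOn (by fun_prop)
  · have h1 := hφe x hx.1
    rw [hFA x hx] at h1
    simp only [g] at h1
    have h2 := hPr0 x hx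
    rw [mul_pow, ← Complex.exp_nat_mul]
    have h3 : ((2 : ℕ) : ℂ) * (φ x / 2) = φ x := by push_cast; ring
    rw [h3, ← h1]
    field_simp

theorem Pmat_neg (s : ℝ) (a b : ℝ) : Pmat s ![-a, -b, 0] = Pmat s ![a, b, 0] := by
  unfold Pmat
  congr 2
  have : (![-a, -b, 0] : Fin 3 → ℝ) = - ![a, b, 0] := by
    ext i; fin_cases i <;> simp
  rw [this, Matrix.neg_vecMulVec, Matrix.vecMulVec_neg, neg_neg]

end Aux

/-- a continuous `𝒬₂`-valued field on the closure of a planar domain with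
holes which is orientable (continuously) on each hole boundary `∂ωᵢ` is orientable on
all of `cl(G)`. -/
theorem stmt12 (s : ℝ) (hs : s ≠ 0) (hs' : s ∈ Set.Icc (-(1 / 2) : ℝ) 1)
    (Ω : Set (EuclideanSpace ℝ (Fin 2)))
    (hopen : IsOpen Ω) (hconn : IsConnected Ω) (hbdd : Bornology.IsBounded Ω)
    (hJordan : IsJordanCurve (frontier Ω))
    (N : ℕ) (ω : Fin N → Set (EuclideanSpace ℝ (Fin 2)))
    (hωopen : ∀ i, IsOpen (ω i)) (hωconn : ∀ i, IsConnected (ω i))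
    (hωbdd : ∀ i, Bornology.IsBounded (ω i))
    (hωJordan : ∀ i, IsJordanCurve (frontier (ω i)))
    (hsub : ∀ i, closure (ω i) ⊆ Ω)
    (hdisj : ∀ i j, i ≠ j → closure (ω i) ∩ closure (ω j) = ∅)
    (G : Set (EuclideanSpace ℝ (Fin 2))) (hG : G = Ω \ ⋃ i, closure (ω i))
    (Q : EuclideanSpace ℝ (Fin 2) → Matrix (Fin 3) (Fin 3) ℝ)
    (hQc : ContinuousOn Q (closure G))
    (hQval : ∀ x ∈ closure G, ∃ m : EuclideanSpace ℝ (Fin 2), ‖m‖ = 1 ∧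
      Q x = Pmat s ![m 0, m 1, 0])
    (horient : ∀ i, ∃ m : EuclideanSpace ℝ (Fin 2) → EuclideanSpace ℝ (Fin 2),
      ContinuousOn m (frontier (ω i)) ∧
      ∀ x ∈ frontier (ω i), ‖m x‖ = 1 ∧ Q x = Pmat s ![m x 0, m x 1, 0]) :
    ∃ m : EuclideanSpace ℝ (Fin 2) → EuclideanSpace ℝ (Fin 2),
      ContinuousOn m (closure G) ∧
      ∀ x ∈ closure G, ‖m x‖ = 1 ∧ Q x = Pmat s ![m x 0, m x 1, 0] := by
  classical
  let T : ℂ ≃ₗᵢ[ℝ] EuclideanSpace ℝ (Fin 2) := Complex.orthonormalBasisOneI.repr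
  have hTs : ∀ m : EuclideanSpace ℝ (Fin 2), T.symm m = ⟨m 0, m 1⟩ := by
    intro m
    rw [LinearIsometryEquiv.symm_apply_eq]
    ext i
    fin_cases i <;> simp [T]
  let qq : EuclideanSpace ℝ (Fin 2) → ℂ := fun x =>
    ((2 * (Q x 0 0 / s + 1 / 3) - 1 : ℝ) : ℂ) + ((2 * (Q x 0 1 / s) : ℝ) : ℂ) * Complex.I
  have hqq : ∀ (x m : EuclideanSpace ℝ (Fin 2)), ‖m‖ = 1 → Q x = Pmat s ![m 0, m 1, 0] →
      T.symm m ^ 2 = qq x := by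
    intro x m hm hQx
    have h1 : m 0 ^ 2 + m 1 ^ 2 = 1 := by
      have := EuclideanSpace.norm_sq_eq m
      rw [hm] at this
      simp [Fin.sum_univ_two] at this
      linarith
    have h00 : Q x 0 0 = s * (m 0 * m 0 - 1 / 3) := by
      rw [hQx]; simp [Pmat, Matrix.vecMulVec_apply]
    have h01 : Q x 0 1 = s * (m 0 * m 1) := by
      rw [hQx]; simp [Pmat, Matrix.vecMulVec_apply]
    simp only [qq, h00, h01, hTs]
    rw [mul_div_cancel_left₀ _ hs, mul_div_cancel_left₀ _ hs]
    apply Complex.ext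
    · simp [pow_two]; linarith
    · simp [pow_two]; ring
  choose m hm hmv using horient
  have hCcl : IsClosed (⋃ i, closure (ω i)) := isClosed_iUnion_of_finite fun i => isClosed_closure
  have hAsub : closure Ω \ (⋃ i, ω i) ⊆ closure G ∪ ⋃ i, frontier (ω i) := by
    rintro x ⟨hx, hxn⟩
    by_cases h : x ∈ ⋃ i, closure (ω i)
    · obtain ⟨i, hi⟩ := Set.mem_iUnion.1 h
      refine Or.inr (Set.mem_iUnion.2 ⟨i, ?_⟩)
      rw [(hωopen i).frontier_eq]
      exact ⟨hi, fun h => hxn (Set.mem_iUnion.2 ⟨i, h⟩)⟩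
    · left
      have := hCcl.isOpen_compl.inter_closure (t := Ω) ⟨h, hx⟩
      rw [hG, Set.diff_eq, Set.inter_comm]
      exact this
  have hGA : closure G ⊆ closure Ω \ (⋃ i, ω i) := by
    refine closure_minimal ?_ (isClosed_closure.sdiff (isOpen_iUnion hωopen))
    rw [hG]
    rintro x ⟨hx, hxn⟩
    refine ⟨subset_closure hx, fun h => hxn ?_⟩
    obtain ⟨i, hi⟩ := Set.mem_iUnion.1 h
    exact Set.mem_iUnion.2 ⟨i, subset_closure hi⟩
  have hqc : ContinuousOn qq (closure G ∪ ⋃ i, frontier (ω i)) := by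
    refine ContinuousOn.union_of_isClosed ?_ ?_ isClosed_closure
      (isClosed_iUnion_of_finite fun i => isClosed_frontier)
    · have h00 : ContinuousOn (fun x => Q x 0 0) (closure G) :=
        (continuous_id.matrix_elem 0 0).comp_continuousOn hQc
      have h01 : ContinuousOn (fun x => Q x 0 1) (closure G) :=
        (continuous_id.matrix_elem 0 1).comp_continuousOn hQc
      have h2 : ContinuousOn (fun x => (2 * (Q x 0 0 / s + 1 / 3) - 1 : ℝ)) (closure G) := by
        fun_prop
      have h3 : ContinuousOn (fun x => (2 * (Q x 0 1 / s) : ℝ)) (closure G) := by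
        fun_prop
      exact (Complex.continuous_ofReal.comp_continuousOn h2).add
        ((Complex.continuous_ofReal.comp_continuousOn h3).mul continuousOn_const)
    · refine (locallyFinite_of_finite _).continuousOn_iUnion (fun i => isClosed_frontier)
        fun i => ?_
      refine ContinuousOn.congr (f := fun x => T.symm (m i x) ^ 2) ?_ ?_
      · exact (T.symm.continuous.comp_continuousOn (hm i)).pow 2
      · exact fun x hx => (hqq x _ (hmv i x hx).1 (hmv i x hx).2).symm
  have hunit : ∀ u : EuclideanSpace ℝ (Fin 2), ‖u‖ = 1 → T.symm u ^ 2 ≠ 0 := fun u hu =>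
    pow_ne_zero _ (fun h => by
      have : ‖T.symm u‖ = 1 := by rw [LinearIsometryEquiv.norm_map, hu]
      simp [h] at this)
  have hq0 : ∀ x ∈ closure Ω \ (⋃ i, ω i), qq x ≠ 0 := by
    intro x hx
    rcases hAsub hx with h | h
    · obtain ⟨u, hu, hQu⟩ := hQval x h
      rw [← hqq x u hu hQu]
      exact hunit u hu
    · obtain ⟨i, hi⟩ := Set.mem_iUnion.1 h
      rw [← hqq x _ (hmv i x hi).1 (hmv i x hi).2]
      exact hunit _ (hmv i x hi).1
  -- transfer to `ℂ`
  obtain ⟨f, hf, hfinj, hfr⟩ := hJordan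
  let γ : Circle → ℂ := fun w => T.symm (f ⟨T w, by
    rw [mem_sphere_zero_iff_norm, LinearIsometryEquiv.norm_map]; exact w.norm_coe⟩)
  have hγc : Continuous γ := by
    refine T.symm.continuous.comp (hf.comp (Continuous.subtype_mk ?_ _))
    exact T.continuous.comp continuous_subtype_val
  have hγinj : Function.Injective γ := by
    intro a b hab
    have := congrArg Subtype.val (hfinj (T.symm.injective hab))
    exact Circle.ext (T.injective this)
  have hcl : ∀ S : Set (EuclideanSpace ℝ (Fin 2)), closure (T ⁻¹' S) = T ⁻¹' closure S :=
    fun S => (T.toHomeomorph.preimage_closure S).symm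
  have hfro : ∀ S : Set (EuclideanSpace ℝ (Fin 2)), frontier (T ⁻¹' S) = T ⁻¹' frontier S :=
    fun S => (T.toHomeomorph.preimage_frontier S).symm
  have hbd : ∀ S : Set (EuclideanSpace ℝ (Fin 2)), Bornology.IsBounded S →
      Bornology.IsBounded (T ⁻¹' S) := fun S hS => T.antilipschitz.isBounded_preimage hS
  have hγr : Set.range γ = frontier (T ⁻¹' Ω) := by
    rw [hfro, ← hfr]
    ext z
    constructor
    · rintro ⟨w, rfl⟩
      simp [γ]
    · rintro ⟨u, hu⟩
      have hu1 : ‖T.symm (u : EuclideanSpace ℝ (Fin 2))‖ = 1 := by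
        rw [LinearIsometryEquiv.norm_map]; exact mem_sphere_zero_iff_norm.1 u.2
      refine ⟨⟨T.symm u, mem_sphere_zero_iff_norm.2 hu1⟩, ?_⟩
      simp only [γ]
      rw [LinearIsometryEquiv.symm_apply_eq, ← hu]
      congr 1
      exact Subtype.ext (by simp)
  have hAeq : closure (T ⁻¹' Ω) \ ⋃ i, T ⁻¹' ω i = T ⁻¹' (closure Ω \ ⋃ i, ω i) := by
    rw [hcl, Set.preimage_diff, Set.preimage_iUnion]
  obtain ⟨S, hS, hSq⟩ := Aux.main_C (T ⁻¹' Ω) (hopen.preimage T.continuous) (hbd _ hbdd)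
    (hconn.nonempty.preimage T.surjective) γ hγc hγinj hγr N (fun i => T ⁻¹' ω i)
    (fun i => (hωopen i).preimage T.continuous) (fun i => hbd _ (hωbdd i))
    (fun i j hij => by rw [hcl, hcl, ← Set.preimage_inter, hdisj i j hij, Set.preimage_empty])
    (fun i => by rw [hcl]; exact Set.preimage_mono (hsub i))
    (fun z => qq (T z))
    (by
      rw [hAeq]
      exact (hqc.mono hAsub).comp T.continuous.continuousOn (fun x hx => hx))
    (by
      rw [hAeq]
      exact fun x hx => hq0 _ hx)
    (fun i z => T.symm (m i (T z)))
    (fun i => by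
      rw [hfro]
      exact T.symm.continuous.comp_continuousOn
        ((hm i).comp T.continuous.continuousOn (fun x hx => hx)))
    (fun i x hx => by
      rw [hfro] at hx
      rw [LinearIsometryEquiv.norm_map]
      exact (hmv i _ hx).1)
    (fun i x hx => by
      rw [hfro] at hx
      exact hqq _ _ (hmv i _ hx).1 (hmv i _ hx).2)
  rw [hAeq] at hS hSq
  refine ⟨fun x => T (S (T.symm x)), ?_, ?_⟩
  · refine T.continuous.comp_continuousOn (hS.comp T.symm.continuous.continuousOn fun x hx => ?_)
    simpa using hGA hx
  · intro x hx
    obtain ⟨u, hu, hQu⟩ := hQval x hx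
    have h1 := hSq (T.symm x) (by simpa using hGA hx)
    simp only [LinearIsometryEquiv.apply_symm_apply] at h1
    rw [← hqq x u hu hQu, sq_eq_sq_iff_eq_or_eq_neg] at h1
    rcases h1 with h1 | h1
    · simp only [h1, LinearIsometryEquiv.apply_symm_apply]
      exact ⟨hu, hQu⟩
    · simp only [h1, map_neg, LinearIsometryEquiv.apply_symm_apply, norm_neg, PiLp.neg_apply]
      exact ⟨hu, by rw [Aux.Pmat_neg]; exact hQu⟩
end
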